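/- Let ω be a radial weight in D̂. Then there exists a radial weight ν such that P_ω : L^∞_ν̂ → H^∞_ν̂ is bounded if and only if ω ∈ Ď. In particular, if ω ∈ D̂ \ Ď, then for every radial weight ν the projection P_ω is not bounded from L^∞_ν̂ to H^∞_ν̂. -/

import Mathlib

open MeasureTheory Set Complex
open scoped ENNReal

noncomputable section

/-- The open unit disc in the complex plane. -/
def unitDisc : Set ℂ := Metric.ball 0 1

/-- Tail integral `ω̂(r) = ∫_r^1 ω(s) ds`. -/
def tl (ω : ℝ → ℝ) (r : ℝ) : ℝ := ∫ s in r..1, ω s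

/-- Moment `ω_x = ∫_0^1 s^x ω(s) ds` (real power in the exponent). -/
def mom (ω : ℝ → ℝ) (x : ℝ) : ℝ := ∫ s in (0:ℝ)..1, s ^ x * ω s

/-- `ω` is a radial weight: nonnegative and integrable on `[0,1)`, with positive
tail integrals. -/
def IsRadialWeight (ω : ℝ → ℝ) : Prop :=
  (∀ s ∈ Ico (0:ℝ) 1, 0 ≤ ω s) ∧ IntegrableOn ω (Ico (0:ℝ) 1) ∧
    ∀ r ∈ Ico (0:ℝ) 1, 0 < tl ω r

/-- The upper doubling class `D̂`: `sup_{0≤r<1} ω̂(r)/ω̂((1+r)/2) < ∞`. -/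
def Dhat (ω : ℝ → ℝ) : Prop :=
  ∃ C : ℝ, ∀ r ∈ Ico (0:ℝ) 1, tl ω r ≤ C * tl ω ((1 + r) / 2)

/-- The class `Ď`: there are `K > 1`, `C > 1` with `ω̂(r) ≥ C ω̂(1 - (1-r)/K)`. -/
def Dcheck (ω : ℝ → ℝ) : Prop :=
  ∃ K C : ℝ, 1 < K ∧ 1 < C ∧ ∀ r ∈ Ico (0:ℝ) 1, C * tl ω (1 - (1 - r) / K) ≤ tl ω r

/-- The class `D = D̂ ∩ Ď`. -/
def DD (ω : ℝ → ℝ) : Prop := Dhat ω ∧ Dcheck ω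

/-- The Bergman reproducing kernel `B^ω_z(ζ) = Σ_n (conj z · ζ)^n / (2 ω_{2n+1})`. -/
def bKer (ω : ℝ → ℝ) (z ζ : ℂ) : ℂ :=
  ∑' n : ℕ, (starRingEnd ℂ z * ζ) ^ n / ((2 * mom ω (2 * (n : ℝ) + 1) : ℝ) : ℂ)

/-- The integrand of the Bergman projection. -/
def bInt (ω : ℝ → ℝ) (f : ℂ → ℂ) (z ζ : ℂ) : ℂ :=
  f ζ * starRingEnd ℂ (bKer ω z ζ) * ((ω ‖ζ‖ : ℝ) : ℂ)

/-- The Bergman projection `P_ω f(z) = ∫_𝔻 f(ζ) conj(B^ω_z(ζ)) ω(ζ) dA(ζ)`,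
where `dA` is normalized area measure `dx dy / π`. -/
def bProj (ω : ℝ → ℝ) (f : ℂ → ℂ) (z : ℂ) : ℂ :=
  (Real.pi : ℂ)⁻¹ * ∫ ζ in unitDisc, bInt ω f z ζ

/-- The weighted sup-norm `ess sup_{z ∈ 𝔻} |f(z)| v(|z|)`, valued in `ℝ≥0∞`. -/
def wSup (v : ℝ → ℝ) (f : ℂ → ℂ) : ℝ≥0∞ :=
  essSup (fun z => ENNReal.ofReal (‖f z‖ * v ‖z‖)) (volume.restrict unitDisc)

/-- `P_ω : L^∞_v → H^∞_v` is bounded: there is `C > 0` so that for every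
`f ∈ L^∞_v` the defining integral converges absolutely at every point of `𝔻`,
`P_ω f` is analytic on `𝔻`, and `‖P_ω f‖_{L^∞_v} ≤ C ‖f‖_{L^∞_v}`. -/
def ProjBddH (ω v : ℝ → ℝ) : Prop :=
  ∃ C : ℝ, 0 < C ∧ ∀ f : ℂ → ℂ,
    AEStronglyMeasurable f (volume.restrict unitDisc) → wSup v f < ⊤ →
    (∀ z ∈ unitDisc, IntegrableOn (bInt ω f z) unitDisc) ∧
    DifferentiableOn ℂ (bProj ω f) unitDisc ∧
    wSup v (bProj ω f) ≤ ENNReal.ofReal C * wSup v f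

/-- `P_ω : L^∞_v → B^∞_v` is bounded: there is `C > 0` so that for every
`f ∈ L^∞_v` the defining integral converges absolutely at every point of `𝔻`,
`P_ω f` is analytic on `𝔻`, and `‖P_ω f‖_{B^∞_v} ≤ C ‖f‖_{L^∞_v}`. -/
def ProjBddB (ω v : ℝ → ℝ) : Prop :=
  ∃ C : ℝ, 0 < C ∧ ∀ f : ℂ → ℂ,
    AEStronglyMeasurable f (volume.restrict unitDisc) → wSup v f < ⊤ →
    (∀ z ∈ unitDisc, IntegrableOn (bInt ω f z) unitDisc) ∧
    DifferentiableOn ℂ (bProj ω f) unitDisc ∧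
    ∀ z ∈ unitDisc,
      ENNReal.ofReal ((1 - ‖z‖) * v ‖z‖ * ‖deriv (bProj ω f) z‖) ≤
        ENNReal.ofReal C * wSup v f

/-- The moment condition `sup_{x ≥ 0} (ν_x / ω_{2x}) (ω/ν̂)_x < ∞`. -/
def MomCond (ω ν : ℝ → ℝ) : Prop :=
  ∃ C : ℝ, ∀ x : ℝ, 0 ≤ x →
    mom ν x / mom ω (2 * x) * mom (fun s => ω s / tl ν s) x ≤ C

/-- The tail condition `sup_{0 ≤ r < 1} (ν̂(r)/ω̂(r)) ∫_r^1 ω(s)/ν̂(s) ds < ∞`. -/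
def TailCond (ω ν : ℝ → ℝ) : Prop :=
  ∃ C : ℝ, ∀ r ∈ Ico (0:ℝ) 1, tl ν r / tl ω r * tl (fun s => ω s / tl ν s) r ≤ C

structure Nice (ω : ℝ → ℝ) : Prop where
  meas : Measurable ω
  nn : ∀ s, 0 ≤ ω s
  int : Integrable ω
  pos : ∀ r ∈ Ico (0:ℝ) 1, 0 < tl ω r

/-- natural moments -/
def nm (ω : ℝ → ℝ) (k : ℕ) : ℝ := ∫ s in (0:ℝ)..1, s ^ k * ω s

theorem mom_eq (ω : ℝ → ℝ) (n : ℕ) : mom ω (2 * (n:ℝ) + 1) = nm ω (2 * n + 1) := by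
  unfold mom nm
  congr 1
  ext s
  rw [← Real.rpow_natCast]
  push_cast
  rfl

namespace Nice
variable {ω : ℝ → ℝ}

theorem ii (h : Nice ω) (a b : ℝ) : IntervalIntegrable ω volume a b := h.int.intervalIntegrable

theorem iip (h : Nice ω) (k : ℕ) (a b : ℝ) : IntervalIntegrable (fun s => s ^ k * ω s) volume a b :=
  (h.ii a b).continuousOn_mul (by fun_prop)

theorem tl_anti (h : Nice ω) {a b : ℝ} (hab : a ≤ b) : tl ω b ≤ tl ω a := by
  unfold tl
  have := intervalIntegral.integral_add_adjacent_intervals (h.ii a b) (h.ii b 1)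
  have h2 : 0 ≤ ∫ s in a..b, ω s := intervalIntegral.integral_nonneg hab (fun s _ => h.nn s)
  linarith

theorem tl_nonneg (h : Nice ω) {a : ℝ} (ha : a ≤ 1) : 0 ≤ tl ω a :=
  intervalIntegral.integral_nonneg ha (fun s _ => h.nn s)

theorem nm_anti (h : Nice ω) {j k : ℕ} (hjk : j ≤ k) : nm ω k ≤ nm ω j := by
  unfold nm
  apply intervalIntegral.integral_mono_on zero_le_one (h.iip _ _ _) (h.iip _ _ _)
  intro s hs
  exact mul_le_mul_of_nonneg_right (pow_le_pow_of_le_one hs.1 hs.2 hjk) (h.nn s)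

theorem nm_ge (h : Nice ω) (k : ℕ) {t : ℝ} (ht0 : 0 ≤ t) (ht1 : t ≤ 1) : t ^ k * tl ω t ≤ nm ω k := by
  unfold nm tl
  rw [← intervalIntegral.integral_add_adjacent_intervals (h.iip k 0 t) (h.iip k t 1)]
  have h2 : 0 ≤ ∫ s in 0..t, s ^ k * ω s := intervalIntegral.integral_nonneg ht0
    (fun s hs => mul_nonneg (pow_nonneg hs.1 _) (h.nn s))
  have h3 : t ^ k * (∫ s in t..1, ω s) ≤ ∫ s in t..1, s ^ k * ω s := by
    rw [← intervalIntegral.integral_const_mul]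
    apply intervalIntegral.integral_mono_on ht1 ((h.ii _ _).const_mul _) (h.iip _ _ _)
    intro s hs
    exact mul_le_mul_of_nonneg_right (pow_le_pow_left₀ ht0 hs.1 _) (h.nn s)
  linarith

theorem nm_pos (h : Nice ω) (k : ℕ) : 0 < nm ω k :=
  lt_of_lt_of_le (mul_pos (by positivity) (h.pos (1/2) (by norm_num)))
    (h.nm_ge k (t := 1/2) (by norm_num) (by norm_num))

theorem nm_le (h : Nice ω) (k : ℕ) : nm ω k ≤ tl ω 0 := by
  have := h.nm_anti (Nat.zero_le k)
  simpa [nm, tl] using this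

/-- splitting estimate -/
theorem nm_split (h : Nice ω) (n : ℕ) {t : ℝ} (ht0 : 0 ≤ t) (ht1 : t ≤ 1) :
    nm ω (2 * n) ≤ t ^ n * nm ω n + tl ω t := by
  have e1 : nm ω (2*n) = (∫ s in 0..t, s ^ (2*n) * ω s) + ∫ s in t..1, s ^ (2*n) * ω s :=
    (intervalIntegral.integral_add_adjacent_intervals (h.iip _ 0 t) (h.iip _ t 1)).symm
  have e2 : nm ω n = (∫ s in 0..t, s ^ n * ω s) + ∫ s in t..1, s ^ n * ω s :=
    (intervalIntegral.integral_add_adjacent_intervals (h.iip _ 0 t) (h.iip _ t 1)).symm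
  have h1 : (∫ s in 0..t, s ^ (2*n) * ω s) ≤ t ^ n * ∫ s in 0..t, s ^ n * ω s := by
    rw [← intervalIntegral.integral_const_mul]
    apply intervalIntegral.integral_mono_on ht0 (h.iip _ _ _) ((h.iip _ _ _).const_mul _)
    intro s hs
    have : s ^ (2*n) = s ^ n * s ^ n := by rw [two_mul, pow_add]
    rw [this, mul_assoc]
    exact mul_le_mul_of_nonneg_right (pow_le_pow_left₀ hs.1 hs.2 _)
      (mul_nonneg (pow_nonneg hs.1 _) (h.nn s))
  have h2 : (∫ s in t..1, s ^ (2*n) * ω s) ≤ tl ω t := by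
    unfold tl
    apply intervalIntegral.integral_mono_on ht1 (h.iip _ _ _) (h.ii _ _)
    intro s hs
    have := pow_le_one₀ (n := 2*n) (ht0.trans hs.1) hs.2
    nlinarith [h.nn s]
  have h3 : 0 ≤ ∫ s in t..1, s ^ n * ω s := intervalIntegral.integral_nonneg ht1
    (fun s hs => mul_nonneg (pow_nonneg (ht0.trans hs.1) _) (h.nn s))
  have h4 : 0 ≤ t ^ n := pow_nonneg ht0 n
  nlinarith

theorem tl_cont (h : Nice ω) : Continuous (tl ω) := by
  have : tl ω = fun r => - ∫ s in (1:ℝ)..r, ω s := by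
    ext r; unfold tl; rw [intervalIntegral.integral_symm]
  rw [this]
  exact (intervalIntegral.continuous_primitive (fun a b => h.ii a b) 1).neg

theorem dhat_one (h : Nice ω) {C : ℝ} (hC : ∀ r ∈ Ico (0:ℝ) 1, tl ω r ≤ C * tl ω ((1 + r) / 2)) : 1 ≤ C := by
  have h1 := hC 0 (by norm_num)
  have h2 := h.tl_anti (a := 0) (b := (1+0)/2) (by norm_num)
  have h3 := h.pos ((1+0)/2) (by norm_num)
  by_contra hlt
  push Not at hlt
  nlinarith

theorem dhat_iter (h : Nice ω) {C : ℝ} (hC : ∀ r ∈ Ico (0:ℝ) 1, tl ω r ≤ C * tl ω ((1 + r) / 2)) (p : ℕ)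
    {d : ℝ} (hd0 : 0 < d) (hd1 : d ≤ 1) : tl ω (1 - d) ≤ C ^ p * tl ω (1 - d / 2 ^ p) := by
  have hC1 := h.dhat_one hC
  induction p with
  | zero => simp
  | succ p ih =>
    have hp : (1:ℝ) ≤ 2 ^ p := one_le_pow₀ (by norm_num)
    have h1 := hC (1 - d / 2 ^ p) ⟨by
      have : d / 2 ^ p ≤ 1 := by rw [div_le_one (by positivity)]; linarith
      linarith, by
      have : 0 < d / 2 ^ p := by positivity
      linarith⟩
    have e : (1 + (1 - d / 2 ^ p)) / 2 = 1 - d / 2 ^ (p+1) := by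
      rw [pow_succ]; field_simp; ring
    rw [e] at h1
    calc _ ≤ _ := ih
      _ ≤ C ^ p * (C * tl ω (1 - d / 2 ^ (p+1))) := by gcongr
      _ = _ := by ring

theorem dhat_scale (h : Nice ω) {C : ℝ} (hC : ∀ r ∈ Ico (0:ℝ) 1, tl ω r ≤ C * tl ω ((1 + r) / 2)) (K : ℝ)
    (hK : 1 ≤ K) : ∃ D : ℝ, 1 ≤ D ∧ ∀ d : ℝ, 0 < d → d ≤ 1 →
      tl ω (1 - d) ≤ D * tl ω (1 - d / K) := by
  obtain ⟨p, hp⟩ := pow_unbounded_of_one_lt K (by norm_num : (1:ℝ) < 2)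
  have hC1 := h.dhat_one hC
  refine ⟨C ^ p, one_le_pow₀ hC1, fun d hd0 hd1 => (h.dhat_iter hC p hd0 hd1).trans ?_⟩
  gcongr
  apply h.tl_anti
  gcongr

/-- Upper moment estimate at dyadic points. -/
theorem nm_dyadic (h : Nice ω) {C : ℝ} (hC : ∀ r ∈ Ico (0:ℝ) 1, tl ω r ≤ C * tl ω ((1 + r) / 2)) :
    ∃ A : ℝ, 0 < A ∧ ∀ j : ℕ, nm ω (2 ^ j) ≤ A * tl ω (1 - 1 / 2 ^ j) := by
  have hC1 := h.dhat_one hC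
  obtain ⟨p, hp⟩ : ∃ p : ℕ, Real.exp (-(2 ^ p : ℝ)) * C ≤ 1 / 2 := by
    obtain ⟨p, hp⟩ := pow_unbounded_of_one_lt (2 * C) (by norm_num : (1:ℝ) < 2)
    refine ⟨p, ?_⟩
    rw [Real.exp_neg, inv_mul_le_iff₀ (Real.exp_pos _)]
    have := Real.add_one_le_exp ((2:ℝ)^p)
    linarith
  have hCp : 1 ≤ C ^ (p+1) := one_le_pow₀ hC1
  refine ⟨2 * C ^ (p+1), by positivity, fun j => ?_⟩
  induction j with
  | zero =>
    have h1 := h.nm_le (2^0)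
    have h2 := h.tl_nonneg (a := 0) (by norm_num)
    norm_num at h1 ⊢
    nlinarith
  | succ j ih =>
    have hpos : 0 < tl ω (1 - 1 / 2 ^ (j+1)) := h.pos _ ⟨by
      have : (1:ℝ) / 2 ^ (j+1) ≤ 1 := by
        rw [div_le_one (by positivity)]; exact one_le_pow₀ (by norm_num)
      linarith, by
      have : (0:ℝ) < 1 / 2 ^ (j+1) := by positivity
      linarith⟩
    by_cases hjp : j < p
    · have h1 := h.nm_le (2^(j+1))
      have h2 := h.dhat_iter hC (j+1) (d := 1) one_pos le_rfl
      rw [sub_self] at h2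
      have h3 : C ^ (j+1) ≤ C ^ (p+1) := pow_le_pow_right₀ hC1 (by omega)
      nlinarith
    · push Not at hjp
      obtain ⟨i, rfl⟩ := Nat.exists_eq_add_of_le hjp
      have ht : (1:ℝ) / 2 ^ i ≤ 1 := by
        rw [div_le_one (by positivity)]; exact one_le_pow₀ (by norm_num)
      have h1 := h.nm_split (2^(p+i)) (t := 1 - 1 / 2 ^ i) (by linarith) (by
        have : (0:ℝ) < 1 / 2 ^ i := by positivity
        linarith)
      have h2 := h.dhat_iter hC (p+1) (d := 1 / 2^i) (by positivity) ht
      have e : (1:ℝ) / 2 ^ i / 2 ^ (p+1) = 1 / 2 ^ (p+i+1) := by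
        rw [div_div, ← pow_add]; congr 2; ring
      rw [e] at h2
      have h3 : (1 - 1 / 2 ^ i : ℝ) ^ (2 ^ (p+i)) ≤ Real.exp (-(2 ^ p : ℝ)) := by
        have h4 : (1 - 1 / 2 ^ i : ℝ) ≤ Real.exp (-(1 / 2 ^ i)) := by
          have := Real.add_one_le_exp (-(1 / 2 ^ i : ℝ)); linarith
        calc _ ≤ (Real.exp (-(1 / 2 ^ i))) ^ (2 ^ (p+i)) := by
              apply pow_le_pow_left₀ (by linarith) h4
          _ = _ := by
              rw [← Real.exp_nat_mul]; congr 1; push_cast; rw [pow_add]; field_simp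
      have h5 := h.dhat_iter hC 1 (d := 1 / 2^(p+i)) (by positivity) (by
        rw [div_le_one (by positivity)]; exact one_le_pow₀ (by norm_num))
      have e2 : (1:ℝ) / 2 ^ (p+i) / 2 ^ 1 = 1 / 2 ^ (p+i+1) := by
        rw [div_div, ← pow_add]
      rw [e2, pow_one] at h5
      have e3 : 2 ^ (p+i+1) = 2 * 2 ^ (p+i) := by rw [pow_succ]; ring
      rw [e3]
      set X := tl ω (1 - 1 / 2 ^ (p+i+1))
      have n0 := (h.nm_pos (2^(p+i))).le
      calc _ ≤ _ := h1
        _ ≤ Real.exp (-(2 ^ p : ℝ)) * (2 * C ^ (p+1) * (C * X)) + C ^ (p+1) * X := by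
          apply add_le_add _ h2
          apply mul_le_mul h3 _ n0 (Real.exp_pos _).le
          exact ih.trans (by gcongr)
        _ = (Real.exp (-(2 ^ p : ℝ)) * C) * (2 * C ^ (p+1) * X) + C ^ (p+1) * X := by ring
        _ ≤ (1/2) * (2 * C ^ (p+1) * X) + C ^ (p+1) * X := by gcongr
        _ = _ := by ring

theorem nm_upper (h : Nice ω) {C : ℝ} (hC : ∀ r ∈ Ico (0:ℝ) 1, tl ω r ≤ C * tl ω ((1 + r) / 2)) :
    ∃ A : ℝ, 0 < A ∧ ∀ n : ℕ, 1 ≤ n → nm ω n ≤ A * tl ω (1 - 1 / n) := by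
  obtain ⟨A, hA, hj⟩ := h.nm_dyadic hC
  have hC1 := h.dhat_one hC
  refine ⟨A * C, by positivity, fun n hn => ?_⟩
  have h1 : 2 ^ (Nat.log 2 n) ≤ n := Nat.pow_log_le_self 2 (by omega)
  have h2 : n < 2 ^ (Nat.log 2 n + 1) := Nat.lt_pow_succ_log_self (by norm_num) n
  set j := Nat.log 2 n
  have h5 := h.dhat_iter hC 1 (d := 1 / 2^j) (by positivity) (by
        rw [div_le_one (by positivity)]; exact one_le_pow₀ (by norm_num))
  have e2 : (1:ℝ) / 2 ^ j / 2 ^ 1 = 1 / 2 ^ (j+1) := by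
    rw [div_div, ← pow_add]
  rw [e2, pow_one] at h5
  have h6 : tl ω (1 - 1 / 2 ^ (j+1)) ≤ tl ω (1 - 1 / n) := by
    apply h.tl_anti
    have : (n:ℝ) ≤ 2 ^ (j+1) := by exact_mod_cast h2.le
    have hn' : (0:ℝ) < n := by exact_mod_cast hn
    gcongr
  calc nm ω n ≤ nm ω (2^j) := h.nm_anti h1
    _ ≤ _ := hj j
    _ ≤ A * (C * tl ω (1 - 1 / n)) := by gcongr; exact h5.trans (by gcongr)
    _ = _ := by ring
end Nice

theorem gen_summ {c : ℕ → ℂ} (hc : Summable fun n => ‖c n‖) {w : ℂ} (hw : ‖w‖ ≤ 1) :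
    Summable fun n => ‖c n * w ^ n‖ := by
  refine Summable.of_nonneg_of_le (fun n => norm_nonneg _) (fun n => ?_) hc
  rw [norm_mul, norm_pow]
  exact mul_le_of_le_one_right (norm_nonneg _) (pow_le_one₀ (norm_nonneg _) hw)

theorem gen_cont {c : ℕ → ℂ} (hc : Summable fun n => ‖c n‖) :
    ContinuousOn (fun w : ℂ => ∑' n, c n * w ^ n) (Metric.closedBall 0 1) := by
  apply continuousOn_tsum (u := fun n => ‖c n‖) (fun n => by fun_prop) hc
  intro n w hw
  rw [norm_mul, norm_pow]
  exact mul_le_of_le_one_right (norm_nonneg _) (pow_le_one₀ (norm_nonneg _) (by simpa using hw))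

theorem gen_le {c : ℕ → ℂ} (hc : Summable fun n => ‖c n‖) {w : ℂ} (hw : ‖w‖ ≤ 1) :
    ‖∑' n, c n * w ^ n‖ ≤ ∑' n, ‖c n‖ := by
  refine (norm_tsum_le_tsum_norm (gen_summ hc hw)).trans ?_
  refine (gen_summ hc hw).tsum_le_tsum (fun n => ?_) hc
  rw [norm_mul, norm_pow]
  exact mul_le_of_le_one_right (norm_nonneg _) (pow_le_one₀ (norm_nonneg _) hw)

theorem gen_swap {α : Type*} [MeasurableSpace α] {μ : Measure α} {φ κ : α → ℂ}
    (hφ : Integrable φ μ) (hκm : AEStronglyMeasurable κ μ) (hκ : ∀ᵐ x ∂μ, ‖κ x‖ ≤ 1)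
    {c : ℕ → ℂ} (hc : Summable fun n => ‖c n‖) :
    HasSum (fun n => c n * ∫ x, φ x * κ x ^ n ∂μ) (∫ x, φ x * ∑' n, c n * κ x ^ n ∂μ) := by
  have hi : ∀ n, Integrable (fun x => φ x * κ x ^ n) μ := fun n => by
    refine hφ.mul_bdd (c := 1) (hκm.pow n) ?_
    filter_upwards [hκ] with x hx
    rw [norm_pow]
    exact pow_le_one₀ (norm_nonneg _) hx
  have := hasSum_integral_of_summable_integral_norm (F := fun n x => c n * (φ x * κ x ^ n)) (μ := μ)
    (fun n => (hi n).const_mul _) (by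
      refine Summable.of_nonneg_of_le (fun n => integral_nonneg fun x => norm_nonneg _) (fun n => ?_)
        (hc.mul_right (∫ x, ‖φ x‖ ∂μ))
      simp_rw [norm_mul (c n)]
      rw [integral_const_mul]
      refine mul_le_mul_of_nonneg_left ?_ (norm_nonneg _)
      apply integral_mono_ae (hi n).norm hφ.norm
      filter_upwards [hκ] with x hx
      rw [norm_mul, norm_pow]
      exact mul_le_of_le_one_right (norm_nonneg _) (pow_le_one₀ (norm_nonneg _) hx))
  simp_rw [integral_const_mul] at this
  have e : ∀ x, φ x * ∑' n, c n * κ x ^ n = ∑' n, c n * (φ x * κ x ^ n) := fun x => by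
    rw [← tsum_mul_left]
    refine tsum_congr fun n => ?_
    ring
  simp_rw [e]
  exact this

theorem exp_orth (m n : ℕ) : ∫ θ in (-Real.pi)..Real.pi,
    cexp (I * θ) ^ m * cexp (-(I * θ)) ^ n = if m = n then 2 * (Real.pi : ℂ) else 0 := by
  have e : ∀ θ : ℝ, cexp (I * θ) ^ m * cexp (-(I * θ)) ^ n = cexp ((((m:ℂ) - n) * I) * θ) := by
    intro θ
    rw [← Complex.exp_nat_mul, ← Complex.exp_nat_mul, ← Complex.exp_add]
    congr 1; ring
  simp_rw [e]
  split_ifs with h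
  · subst h
    simp
    ring
  · have hne : ((m:ℂ) - n) * I ≠ 0 := by
      apply mul_ne_zero _ I_ne_zero
      rw [sub_ne_zero]
      exact_mod_cast h
    rw [integral_exp_mul_complex hne]
    have : cexp ((m - n) * I * (Real.pi : ℝ)) = cexp ((m - n) * I * ((-Real.pi : ℝ))) := by
      rw [Complex.exp_eq_exp_iff_exists_int]
      refine ⟨(m:ℤ) - n, ?_⟩
      push_cast
      ring
    rw [this, sub_self, zero_div]

theorem norm_exp_aux (θ : ℝ) : ‖cexp (-(I * θ))‖ = 1 := by
  rw [Complex.norm_exp]; simp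

theorem pars_id {c : ℕ → ℂ} (hc : Summable fun n => ‖c n‖) :
    ∫ θ in (-Real.pi)..Real.pi, ‖∑' n, c n * cexp (-(I * θ)) ^ n‖ ^ 2 =
      2 * Real.pi * ∑' n, ‖c n‖ ^ 2 := by
  have hpi : -Real.pi ≤ Real.pi := by linarith [Real.pi_pos]
  set g : ℝ → ℂ := fun θ => ∑' n, c n * cexp (-(I * θ)) ^ n with hg
  have hgc : Continuous g := by
    have := (gen_cont hc).comp_continuous (f := fun θ : ℝ => cexp (-(I * θ))) (by fun_prop)
      (fun θ => by simp [norm_exp_aux])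
    exact this
  have key : ∀ φ : ℝ → ℂ, Continuous φ →
      HasSum (fun n => c n * ∫ θ in (-Real.pi)..Real.pi, φ θ * cexp (-(I * θ)) ^ n)
        (∫ θ in (-Real.pi)..Real.pi, φ θ * g θ) := by
    intro φ hφ
    simp_rw [intervalIntegral.integral_of_le hpi]
    exact gen_swap ((hφ.intervalIntegrable _ _).1) (by
      apply Continuous.aestronglyMeasurable; fun_prop)
      (Filter.Eventually.of_forall fun θ => (norm_exp_aux θ).le) hc
  have h1 : ∀ m : ℕ, ∫ θ in (-Real.pi)..Real.pi, cexp (I * θ) ^ m * g θ = c m * (2 * Real.pi) := by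
    intro m
    have := key (fun θ => cexp (I * θ) ^ m) (by fun_prop)
    simp_rw [exp_orth] at this
    have h2 := hasSum_ite_eq m (c m * (2 * (Real.pi:ℂ)))
    refine this.unique ?_
    convert h2 using 2 with n
    by_cases h : n = m
    · simp [h]
    · simp [h, Ne.symm h]
  have h2 := key (fun θ => (starRingEnd ℂ) (g θ)) (by fun_prop)
  have h3 : ∀ n : ℕ, ∫ θ in (-Real.pi)..Real.pi, (starRingEnd ℂ) (g θ) * cexp (-(I * θ)) ^ n
      = (starRingEnd ℂ) (c n) * (2 * Real.pi) := by
    intro n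
    have := congrArg (starRingEnd ℂ) (h1 n)
    rw [map_mul, map_mul, intervalIntegral.integral_of_le hpi, ← integral_conj] at this
    simp only [conj_ofReal, map_ofNat] at this
    rw [← this, intervalIntegral.integral_of_le hpi]
    refine integral_congr_ae (Filter.Eventually.of_forall fun θ => ?_)
    simp only
    rw [map_mul, map_pow, ← Complex.exp_conj, map_mul, conj_I, conj_ofReal]
    ring_nf
  simp_rw [h3] at h2
  have h4 : ∀ θ, (starRingEnd ℂ) (g θ) * g θ = ((‖g θ‖ ^ 2 : ℝ) : ℂ) := fun θ => by
    rw [mul_comm, Complex.mul_conj, Complex.normSq_eq_norm_sq]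
  have h5 : ∀ n, c n * ((starRingEnd ℂ) (c n) * (2 * Real.pi)) = ((2 * Real.pi * ‖c n‖^2 : ℝ) : ℂ) := by
    intro n
    rw [← mul_assoc, Complex.mul_conj, Complex.normSq_eq_norm_sq]
    push_cast; ring
  simp_rw [h4, h5] at h2
  rw [intervalIntegral.integral_ofReal] at h2
  have h6 := Complex.hasSum_ofReal.mp h2
  rw [← h6.tsum_eq, tsum_mul_left]

/-- kernel coefficients -/
def an (ω : ℝ → ℝ) (n : ℕ) : ℝ := 1 / (2 * nm ω (2 * n + 1))

theorem pow_aux (l : ℕ) {x : ℝ} (hx0 : 0 ≤ x) (hx1 : x ≤ 1) : (l + 1) * (x ^ l * (1 - x)) ≤ 1 := by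
  have h1 := geom_sum_mul_neg x (l+1)
  have h2 : ((l:ℝ) + 1) * x ^ l ≤ ∑ i ∈ Finset.range (l+1), x ^ i := by
    have : ∑ i ∈ Finset.range (l+1), x ^ l ≤ ∑ i ∈ Finset.range (l+1), x ^ i := by
      apply Finset.sum_le_sum
      intro i hi
      exact pow_le_pow_of_le_one hx0 hx1 (by simp at hi; omega)
    simpa using this
  have h3 : 0 ≤ x ^ (l+1) := by positivity
  nlinarith

namespace Nice
variable {ω : ℝ → ℝ}

theorem an_pos (h : Nice ω) (n : ℕ) : 0 < an ω n := by
  have := h.nm_pos (2*n+1)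
  unfold an; positivity

theorem an_le (h : Nice ω) (n : ℕ) {t : ℝ} (ht0 : 0 < t) (ht1 : t < 1) :
    an ω n ≤ 1 / (2 * (t ^ (2*n+1) * tl ω t)) := by
  have h1 := h.nm_ge (2*n+1) ht0.le ht1.le
  have h2 := h.pos t ⟨ht0.le, ht1⟩
  unfold an
  gcongr

theorem an_geom (h : Nice ω) {r : ℝ} (hr0 : 0 ≤ r) (hr1 : r < 1) :
    ∃ M x : ℝ, 0 ≤ M ∧ 0 ≤ x ∧ x < 1 ∧ ∀ n, an ω n * r ^ n ≤ M * x ^ n := by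
  set t : ℝ := (1 + r) / 2 with ht
  have ht0 : 0 < t := by positivity
  have ht1 : t < 1 := by rw [ht]; linarith
  have h2 := h.pos t ⟨ht0.le, ht1⟩
  refine ⟨1 / (2 * (t * tl ω t)), r / t ^ 2, by positivity, by positivity, ?_, fun n => ?_⟩
  · rw [div_lt_one (by positivity), ht]; nlinarith [sq_pos_of_pos (sub_pos.2 hr1)]
  · calc an ω n * r ^ n ≤ 1 / (2 * (t ^ (2*n+1) * tl ω t)) * r ^ n := by
          gcongr; exact h.an_le n ht0 ht1
      _ = _ := by
          clear_value t; rw [div_pow, ← pow_mul, pow_succ]; field_simp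

theorem an_summ (h : Nice ω) {r : ℝ} (hr0 : 0 ≤ r) (hr1 : r < 1) : Summable fun n => an ω n * r ^ n := by
  obtain ⟨M, x, hM, hx0, hx1, hle⟩ := h.an_geom hr0 hr1
  refine Summable.of_nonneg_of_le (fun n => ?_) hle
    ((summable_geometric_of_lt_one hx0 hx1).mul_left M)
  have := h.an_pos n
  positivity

theorem nan_summ (h : Nice ω) {r : ℝ} (hr0 : 0 ≤ r) (hr1 : r < 1) :
    Summable fun n : ℕ => ((n:ℝ) * an ω n) * r ^ n := by
  obtain ⟨M, x, hM, hx0, hx1, hle⟩ := h.an_geom hr0 hr1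
  refine Summable.of_nonneg_of_le (fun n => ?_) (fun n => ?_)
    ((summable_pow_mul_geometric_of_norm_lt_one 1 (r := x)
      (by rw [Real.norm_of_nonneg hx0]; exact hx1)).mul_left M)
  · have := h.an_pos n
    positivity
  · calc (n:ℝ) * an ω n * r ^ n = n * (an ω n * r ^ n) := by ring
      _ ≤ n * (M * x ^ n) := mul_le_mul_of_nonneg_left (hle n) (by positivity)
      _ = _ := by ring

theorem nan_summ' (h : Nice ω) {r : ℝ} (hr0 : 0 ≤ r) (hr1 : r < 1) :
    Summable fun n : ℕ => (((n:ℝ)+1) * an ω (n+1)) * r ^ n := by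
  set t : ℝ := (1 + r) / 2 with ht
  have ht0 : 0 < t := by positivity
  have ht1 : t < 1 := by rw [ht]; linarith
  have h1 := ((summable_nat_add_iff 1).2 (h.nan_summ ht0.le ht1)).mul_left t⁻¹
  refine Summable.of_nonneg_of_le (fun n => ?_) (fun n => ?_) h1
  · have := h.an_pos (n+1)
    positivity
  · have := h.an_pos (n+1)
    have h3 : r ^ n ≤ t ^ n := pow_le_pow_left₀ hr0 (by rw [ht]; linarith) n
    calc ((n:ℝ)+1) * an ω (n+1) * r ^ n ≤ ((n:ℝ)+1) * an ω (n+1) * t ^ n := by gcongr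
      _ = _ := by push_cast; rw [pow_succ]; field_simp

theorem nm_lower (h : Nice ω) (N : ℕ) (hN : 1 ≤ N) : tl ω (1 - 1 / (2 * N)) ≤ 2 * nm ω N := by
  have hN' : (1:ℝ) ≤ N := by exact_mod_cast hN
  have h0 : (1:ℝ) / (2 * N) ≤ 1/2 := by
    rw [div_le_div_iff₀ (by positivity) (by norm_num)]; linarith
  have h00 : (0:ℝ) < 1 / (2 * N) := by positivity
  have h1 := h.nm_ge N (t := 1 - 1 / (2 * N)) (by linarith) (by linarith)
  have h2 : (1/2 : ℝ) ≤ (1 - 1 / (2 * N)) ^ N := by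
    have := one_add_mul_le_pow (a := -(1 / (2 * N) : ℝ)) (by linarith) N
    have e : (1:ℝ) + N * -(1 / (2 * N)) = 1/2 := by field_simp; norm_num
    rw [e] at this
    simpa [sub_eq_add_neg] using this
  have h3 := h.pos (1 - 1 / (2 * N)) ⟨by linarith, by linarith⟩
  nlinarith

theorem nm_doubling (h : Nice ω) {C : ℝ} (hC : ∀ r ∈ Ico (0:ℝ) 1, tl ω r ≤ C * tl ω ((1 + r) / 2)) :
    ∃ A : ℝ, 0 < A ∧ ∀ n : ℕ, nm ω (2 * (n / 2) + 1) ≤ A * nm ω (2 * n + 1) := by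
  obtain ⟨A, hA, hu⟩ := h.nm_upper hC
  have hC1 := h.dhat_one hC
  refine ⟨A * (C ^ 3 * 2), by positivity, fun n => ?_⟩
  set k := 2 * (n / 2) + 1 with hk
  have h1 := hu k (by omega)
  have h2 := h.nm_lower (2*n+1) (by omega)
  have hk1 : (1:ℝ) ≤ k := by exact_mod_cast (by omega : 1 ≤ k)
  have h3 := h.dhat_iter hC 3 (d := 1 / k) (by positivity) (by
    rw [div_le_one (by positivity)]; exact hk1)
  have h4 : tl ω (1 - 1 / k / 2 ^ 3) ≤ tl ω (1 - 1 / (2 * (2 * n + 1 : ℕ))) := by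
    apply h.tl_anti
    have : (2 * (2 * n + 1 : ℕ) : ℝ) ≤ k * 2 ^ 3 := by
      have : 2 * (2 * n + 1) ≤ k * 2 ^ 3 := by omega
      exact_mod_cast this
    rw [div_div]
    gcongr
  calc _ ≤ _ := h1
    _ ≤ A * (C ^ 3 * (2 * nm ω (2*n+1))) := by
      gcongr
      refine h3.trans ?_
      gcongr
      exact h4.trans h2
    _ = _ := by ring

theorem nm_diff (h : Nice ω) (n : ℕ) :
    ((n:ℝ) + 1) * (nm ω (2*n+1) - nm ω (2*(n+1)+1)) ≤ 2 * nm ω (2 * (n/2) + 1) := by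
  unfold nm
  rw [← intervalIntegral.integral_sub (h.iip _ _ _) (h.iip _ _ _),
    ← intervalIntegral.integral_const_mul, ← intervalIntegral.integral_const_mul]
  apply intervalIntegral.integral_mono_on zero_le_one
    (((h.iip _ _ _).sub (h.iip _ _ _)).const_mul _) ((h.iip _ _ _).const_mul _)
  intro s hs
  set l := n - n/2 with hl
  have e1 : 2*n+1 = (2 * (n/2) + 1) + 2 * l := by omega
  have e2 : 2*(n+1)+1 = (2 * (n/2) + 1) + 2 * l + 2 := by omega
  have hs2 : s ^ 2 ≤ 1 := pow_le_one₀ hs.1 hs.2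
  have h1 := pow_aux l (x := s ^ 2) (by positivity) hs2
  have h2 : ((n:ℝ) + 1) ≤ 2 * (l + 1) := by
    have : n + 1 ≤ 2 * (l + 1) := by omega
    exact_mod_cast this
  have h3 : 0 ≤ s ^ (2 * (n/2) + 1) * ω s := mul_nonneg (pow_nonneg hs.1 _) (h.nn s)
  have h4 : 0 ≤ (s^2) ^ l * (1 - s ^ 2) := mul_nonneg (by positivity) (by linarith)
  rw [e1, e2]
  calc _ = ((n:ℝ)+1) * ((s^2) ^ l * (1 - s ^ 2)) * (s ^ (2 * (n/2) + 1) * ω s) := by ring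
    _ ≤ (2 * (l + 1)) * ((s^2) ^ l * (1 - s ^ 2)) * (s ^ (2 * (n/2) + 1) * ω s) := by gcongr
    _ = 2 * ((l + 1) * ((s^2) ^ l * (1 - s ^ 2))) * (s ^ (2 * (n/2) + 1) * ω s) := by ring
    _ ≤ 2 * 1 * (s ^ (2 * (n/2) + 1) * ω s) := by gcongr
    _ = _ := by ring

theorem delta_bound (h : Nice ω) {C : ℝ} (hC : ∀ r ∈ Ico (0:ℝ) 1, tl ω r ≤ C * tl ω ((1 + r) / 2)) :
    ∃ A : ℝ, 0 < A ∧ ∀ n : ℕ, |((n:ℝ)+1) * an ω (n+1) - n * an ω n| ≤ A * an ω (n+1) := by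
  obtain ⟨A, hA, hd⟩ := h.nm_doubling hC
  refine ⟨1 + 2 * A, by positivity, fun n => ?_⟩
  have p1 := h.nm_pos (2*n+1)
  have p2 := h.nm_pos (2*(n+1)+1)
  have h1 := h.nm_diff n
  have h2 := hd n
  have h3 := h.nm_anti (j := 2*n+1) (k := 2*(n+1)+1) (by omega)
  have e : ((n:ℝ)+1) * an ω (n+1) - n * an ω n = an ω (n+1) + n * (an ω (n+1) - an ω n) := by ring
  have e2 : (an ω (n+1) - an ω n) =
      (nm ω (2*n+1) - nm ω (2*(n+1)+1)) / nm ω (2*n+1) * an ω (n+1) := by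
    unfold an; field_simp
  have h4 : 0 ≤ (nm ω (2*n+1) - nm ω (2*(n+1)+1)) := by linarith
  have p3 := h.an_pos (n+1)
  have h5 : (n:ℝ) * ((nm ω (2*n+1) - nm ω (2*(n+1)+1)) / nm ω (2*n+1)) ≤ 2 * A := by
    rw [← mul_div_assoc, div_le_iff₀ p1]
    nlinarith
  rw [e, e2, abs_of_nonneg (by positivity)]
  nlinarith

end Nice

/-- derivative kernel -/
def Gk (ω : ℝ → ℝ) (w : ℂ) : ℂ := ∑' n : ℕ, ((((n:ℝ)+1) * an ω (n+1) : ℝ) : ℂ) * w ^ n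

def dl (ω : ℝ → ℝ) (n : ℕ) : ℝ := ((n:ℝ)+1) * an ω (n+1) - n * an ω n

namespace Nice
variable {ω : ℝ → ℝ}

theorem Gk_factor (h : Nice ω) {w : ℂ} (hw : ‖w‖ < 1) : (1 - w) * Gk ω w = ∑' n : ℕ, ((dl ω n : ℝ) : ℂ) * w ^ n := by
  have s1 : Summable fun n : ℕ => ((((n:ℝ)+1) * an ω (n+1) : ℝ) : ℂ) * w ^ n := by
    apply Summable.of_norm
    have := h.nan_summ' (norm_nonneg w) hw
    refine this.congr fun n => ?_
    have := h.an_pos (n+1)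
    rw [norm_mul, norm_pow, Complex.norm_of_nonneg (by positivity)]
  have s2 : Summable fun n : ℕ => (((n:ℝ) * an ω n : ℝ) : ℂ) * w ^ n := by
    apply Summable.of_norm
    have := h.nan_summ (norm_nonneg w) hw
    refine this.congr fun n => ?_
    have := h.an_pos n
    rw [norm_mul, norm_pow, Complex.norm_of_nonneg (by positivity)]
  have e1 : w * Gk ω w = ∑' n : ℕ, (((n:ℝ) * an ω n : ℝ) : ℂ) * w ^ n := by
    rw [s2.tsum_eq_zero_add, Gk, ← tsum_mul_left]
    simp only [Nat.cast_zero, zero_mul, ofReal_zero, zero_add]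
    refine tsum_congr fun n => ?_
    push_cast
    ring
  rw [sub_mul, one_mul, e1, Gk, ← s1.tsum_sub s2]
  refine tsum_congr fun n => ?_
  unfold dl
  push_cast
  ring

theorem Gk_L1 (h : Nice ω) {C : ℝ} (hC : ∀ r ∈ Ico (0:ℝ) 1, tl ω r ≤ C * tl ω ((1 + r) / 2)) :
    ∃ B : ℝ, 0 < B ∧ ∀ q : ℂ, ‖q‖ < 1 →
      ∫ θ in (-Real.pi)..Real.pi, ‖Gk ω (q * cexp (-(I * θ)))‖ ≤ B / ((1 - ‖q‖) * tl ω ‖q‖) := by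
  obtain ⟨A, hA, hd⟩ := h.delta_bound hC
  have hC1 := h.dhat_one hC
  refine ⟨Real.pi * (1 + 2 * C ^ 4 * A ^ 2), by positivity, fun q hq => ?_⟩
  set ρ := ‖q‖ with hρ
  have hρ0 : 0 ≤ ρ := norm_nonneg q
  have hpi := Real.pi_pos
  have hρ' : 0 < 1 - ρ := by linarith
  have hh : 0 < tl ω ρ := h.pos ρ ⟨hρ0, hq⟩
  set H := tl ω ρ with hH
  have hw : ∀ θ : ℝ, ‖q * cexp (-(I * θ))‖ = ρ := fun θ => by rw [norm_mul, norm_exp_aux, mul_one]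
  -- the first square function
  have c1 : Summable fun n => ‖q ^ n‖ := by
    simp_rw [norm_pow]; exact summable_geometric_of_lt_one hρ0 hq
  have P1 := pars_id c1
  have S1 : ∑' n, ‖q ^ n‖ ^ 2 ≤ 1 / (1 - ρ) := by
    simp_rw [norm_pow, ← pow_mul, mul_comm _ 2, pow_mul]
    rw [tsum_geometric_of_lt_one (by positivity) (by nlinarith), ← one_div]
    apply one_div_le_one_div_of_le hρ'
    nlinarith
  -- the second one
  have an2 : ∀ n, (an ω (n+1)) ^ 2 * ρ ^ (2 * n) ≤ 2 * C ^ 4 / H ^ 2 * ρ ^ n := by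
    intro n
    set t : ℝ := 1 - (1 - ρ) / 4 with ht
    have ht34 : 3/4 ≤ t := by rw [ht]; linarith
    have ht0 : 0 < t := by linarith
    have ht1 : t < 1 := by rw [ht]; linarith
    have hht : 0 < tl ω t := h.pos t ⟨ht0.le, ht1⟩
    have b1 := h.an_le (n+1) ht0 ht1
    have b2 : H ≤ C ^ 2 * tl ω t := by
      have := h.dhat_iter hC 2 (d := 1 - ρ) hρ' (by linarith)
      norm_num at this
      rw [ht]; exact this
    have b3 : ρ ≤ t ^ 4 := by
      have := one_add_mul_le_pow (a := -((1 - ρ) / 4)) (by linarith) 4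
      rw [ht, sub_eq_add_neg 1 ((1 - ρ)/4)]
      refine le_trans (le_of_eq ?_) this
      push_cast; ring
    have b4 : ρ ^ n ≤ (t ^ 4) ^ n := pow_le_pow_left₀ hρ0 b3 n
    have b5 : 1 / 6 ≤ t ^ 6 := le_trans (by norm_num) (pow_le_pow_left₀ (by norm_num) ht34 6)
    have b6 : H ^ 2 ≤ C ^ 4 * tl ω t ^ 2 := by
      have := pow_le_pow_left₀ hh.le b2 2
      calc _ ≤ _ := this
        _ = _ := by ring
    have b7 := pow_le_pow_left₀ (h.an_pos (n+1)).le b1 2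
    have b8 : (an ω (n+1)) ^ 2 * ρ ^ n ≤ 2 * C ^ 4 / H ^ 2 := by
      calc (an ω (n+1)) ^ 2 * ρ ^ n ≤ (1 / (2 * (t ^ (2*(n+1)+1) * tl ω t))) ^ 2 * (t ^ 4) ^ n := by
            gcongr
        _ = 1 / (4 * t ^ 6 * tl ω t ^ 2) := by
            rw [div_pow, one_pow, mul_pow, mul_pow, ← pow_mul, ← pow_mul,
              show (2 * (n+1) + 1) * 2 = 4 * n + 6 by ring, pow_add]
            field_simp; norm_num
        _ ≤ 1 / (4 * (1/6) * tl ω t ^ 2) := by gcongr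
        _ ≤ 2 * C ^ 4 / H ^ 2 := by
            rw [div_le_div_iff₀ (by positivity) (by positivity)]
            nlinarith [sq_nonneg (tl ω t)]
    calc (an ω (n+1)) ^ 2 * ρ ^ (2 * n) = ((an ω (n+1)) ^ 2 * ρ ^ n) * ρ ^ n := by ring
      _ ≤ _ := by gcongr
  have nd : ∀ n, ‖((dl ω n : ℝ) : ℂ) * q ^ n‖ = |dl ω n| * ρ ^ n := fun n => by
    rw [norm_mul, norm_pow, Complex.norm_real, Real.norm_eq_abs]
  have c2 : Summable fun n => ‖((dl ω n : ℝ) : ℂ) * q ^ n‖ := by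
    simp_rw [nd]
    have := (h.nan_summ' hρ0 hq).mul_left A
    refine Summable.of_nonneg_of_le (fun n => by positivity) (fun n => ?_) this
    calc |dl ω n| * ρ ^ n ≤ (A * an ω (n+1)) * ρ ^ n := by gcongr; exact hd n
      _ ≤ A * (((n:ℝ)+1) * an ω (n+1) * ρ ^ n) := by
        have := h.an_pos (n+1)
        have h1 : an ω (n+1) ≤ ((n:ℝ)+1) * an ω (n+1) := by
          have : (0:ℝ) ≤ n := by positivity
          nlinarith
        rw [mul_assoc]
        gcongr
  have P2 := pars_id c2
  have S2 : ∑' n, ‖((dl ω n : ℝ) : ℂ) * q ^ n‖ ^ 2 ≤ A ^ 2 * (2 * C ^ 4 / H ^ 2) * (1 / (1 - ρ)) := by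
    have hg : Summable fun n => A ^ 2 * (2 * C ^ 4 / H ^ 2) * ρ ^ n :=
      (summable_geometric_of_lt_one hρ0 hq).mul_left _
    have hle : ∀ n, ‖((dl ω n : ℝ) : ℂ) * q ^ n‖ ^ 2 ≤ A ^ 2 * (2 * C ^ 4 / H ^ 2) * ρ ^ n := by
      intro n
      rw [nd]
      calc (|dl ω n| * ρ ^ n) ^ 2 ≤ ((A * an ω (n+1)) * ρ ^ n) ^ 2 := by gcongr; exact hd n
        _ = A ^ 2 * ((an ω (n+1)) ^ 2 * ρ ^ (2 * n)) := by ring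
        _ ≤ A ^ 2 * (2 * C ^ 4 / H ^ 2 * ρ ^ n) :=
          mul_le_mul_of_nonneg_left (an2 n) (by positivity)
        _ = _ := by ring
    calc _ ≤ ∑' n, A ^ 2 * (2 * C ^ 4 / H ^ 2) * ρ ^ n :=
          (Summable.of_nonneg_of_le (fun n => by positivity) hle hg).tsum_le_tsum hle hg
      _ = _ := by rw [tsum_mul_left, tsum_geometric_of_lt_one hρ0 hq, one_div]
  set u : ℝ → ℂ := fun θ => ∑' n, q ^ n * cexp (-(I * θ)) ^ n with hu
  set v : ℝ → ℂ := fun θ => ∑' n, ((dl ω n : ℝ) : ℂ) * q ^ n * cexp (-(I * θ)) ^ n with hv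
  have huc : Continuous u := (gen_cont c1).comp_continuous (f := fun θ : ℝ => cexp (-(I * θ)))
    (by fun_prop) (fun θ => by simp [norm_exp_aux])
  have hvc : Continuous v := (gen_cont c2).comp_continuous (f := fun θ : ℝ => cexp (-(I * θ)))
    (by fun_prop) (fun θ => by simp [norm_exp_aux])
  have hfac : ∀ θ : ℝ, Gk ω (q * cexp (-(I * θ))) = u θ * v θ := by
    intro θ
    have hwl : ‖q * cexp (-(I * θ))‖ < 1 := by rw [hw]; exact hq
    have f1 := h.Gk_factor hwl
    have f2 : u θ = (1 - q * cexp (-(I * θ)))⁻¹ := by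
      rw [hu]
      simp_rw [← mul_pow]
      exact tsum_geometric_of_norm_lt_one hwl
    have f3 : v θ = (1 - q * cexp (-(I * θ))) * Gk ω (q * cexp (-(I * θ))) := by
      rw [f1, hv]
      simp_rw [mul_pow, mul_assoc]
    have f4 : (1 - q * cexp (-(I * θ))) ≠ 0 := by
      intro h0
      rw [sub_eq_zero] at h0
      rw [← h0] at hwl
      simp at hwl
    rw [f2, f3, inv_mul_cancel_left₀ f4]
  simp_rw [hfac]
  have hle : ∀ θ : ℝ, ‖u θ * v θ‖ ≤ (1/2) * (1 / H) * ‖u θ‖ ^ 2 + (1/2) * H * ‖v θ‖ ^ 2 := by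
    intro θ
    rw [norm_mul]
    have : 0 ≤ (1/2) * (1 / H) * (‖u θ‖ - H * ‖v θ‖) ^ 2 := by positivity
    have e : (1/2) * (1 / H) * (‖u θ‖ - H * ‖v θ‖) ^ 2 = (1/2) * (1 / H) * ‖u θ‖ ^ 2
      + (1/2) * H * ‖v θ‖ ^ 2 - ‖u θ‖ * ‖v θ‖ := by field_simp; ring
    linarith
  calc ∫ θ in (-Real.pi)..Real.pi, ‖u θ * v θ‖
      ≤ ∫ θ in (-Real.pi)..Real.pi, ((1/2) * (1 / H) * ‖u θ‖ ^ 2 + (1/2) * H * ‖v θ‖ ^ 2) := by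
        apply intervalIntegral.integral_mono_on (by linarith)
        · apply Continuous.intervalIntegrable; fun_prop
        · apply Continuous.intervalIntegrable; fun_prop
        · exact fun θ _ => hle θ
    _ = (1/2) * (1 / H) * (2 * Real.pi * ∑' n, ‖q ^ n‖ ^ 2) +
        (1/2) * H * (2 * Real.pi * ∑' n, ‖((dl ω n : ℝ) : ℂ) * q ^ n‖ ^ 2) := by
        rw [← P1, ← P2, ← intervalIntegral.integral_const_mul, ← intervalIntegral.integral_const_mul]
        apply intervalIntegral.integral_add
        · apply Continuous.intervalIntegrable; fun_prop
        · apply Continuous.intervalIntegrable; fun_prop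
    _ ≤ (1/2) * (1 / H) * (2 * Real.pi * (1 / (1 - ρ))) +
        (1/2) * H * (2 * Real.pi * (A ^ 2 * (2 * C ^ 4 / H ^ 2) * (1 / (1 - ρ)))) := by gcongr
    _ = _ := by field_simp
end Nice

theorem mem_uD {z : ℂ} : z ∈ unitDisc ↔ ‖z‖ < 1 := by simp [unitDisc]

theorem uD_meas : MeasurableSet unitDisc := Metric.isOpen_ball.measurableSet

theorem conj_swap {φ : ℂ → ℂ} (hφ : IntegrableOn φ unitDisc)
    {c : ℕ → ℂ} (hc : Summable fun n => ‖c n‖) :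
    HasSum (fun n => c n * ∫ ζ in unitDisc, φ ζ * (starRingEnd ℂ ζ) ^ n)
      (∫ ζ in unitDisc, φ ζ * ∑' n, c n * (starRingEnd ℂ ζ) ^ n) := by
  refine gen_swap hφ (Continuous.aestronglyMeasurable (by fun_prop)) ?_ hc
  filter_upwards [ae_restrict_mem uD_meas] with ζ hζ
  rw [RCLike.norm_conj]
  exact (mem_uD.1 hζ).le

theorem conj_int {φ : ℂ → ℂ} (hφ : IntegrableOn φ unitDisc)
    {c : ℕ → ℂ} (hc : Summable fun n => ‖c n‖) :
    IntegrableOn (fun ζ => φ ζ * ∑' n, c n * (starRingEnd ℂ ζ) ^ n) unitDisc := by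
  refine hφ.mul_bdd (c := ∑' n, ‖c n‖) ?_ ?_
  · refine ContinuousOn.aestronglyMeasurable ?_ uD_meas
    refine (gen_cont hc).comp (by fun_prop) ?_
    intro ζ hζ
    simpa using (mem_uD.1 hζ).le
  · filter_upwards [ae_restrict_mem uD_meas] with ζ hζ
    refine gen_le hc ?_
    rw [RCLike.norm_conj]
    exact (mem_uD.1 hζ).le

/-- Fourier type coefficients -/
def bet (ω : ℝ → ℝ) (f : ℂ → ℂ) (n : ℕ) : ℂ :=
  (Real.pi : ℂ)⁻¹ * ∫ ζ in unitDisc, (f ζ * (ω ‖ζ‖ : ℂ)) * (starRingEnd ℂ ζ) ^ n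

namespace Nice
variable {ω : ℝ → ℝ}

theorem csumm (h : Nice ω) {z : ℂ} (hz : ‖z‖ < 1) : Summable fun n => ‖((an ω n : ℝ) : ℂ) * z ^ n‖ := by
  refine (h.an_summ (norm_nonneg z) hz).congr fun n => ?_
  rw [norm_mul, norm_pow, Complex.norm_of_nonneg (h.an_pos n).le]

theorem csumm' (h : Nice ω) {z : ℂ} (hz : ‖z‖ < 1) :
    Summable fun n : ℕ => ‖((((n:ℝ)+1) * an ω (n+1) : ℝ) : ℂ) * z ^ n‖ := by
  refine (h.nan_summ' (norm_nonneg z) hz).congr fun n => ?_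
  have := h.an_pos (n+1)
  rw [norm_mul, norm_pow, Complex.norm_of_nonneg (by positivity)]

theorem bInt_eq (f : ℂ → ℂ) (z ζ : ℂ) : bInt ω f z ζ =
    (f ζ * (ω ‖ζ‖ : ℂ)) * ∑' n, (((an ω n : ℝ) : ℂ) * z ^ n) * (starRingEnd ℂ ζ) ^ n := by
  unfold bInt bKer
  rw [Complex.conj_tsum, mul_right_comm]
  congr 1
  refine tsum_congr fun n => ?_
  rw [mom_eq, an, map_div₀, map_pow, map_mul, Complex.conj_conj, Complex.conj_ofReal, mul_pow]
  push_cast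
  ring

theorem bInt_int (h : Nice ω) {f : ℂ → ℂ} (hφ : IntegrableOn (fun ζ => f ζ * (ω ‖ζ‖ : ℂ)) unitDisc)
    {z : ℂ} (hz : ‖z‖ < 1) : IntegrableOn (bInt ω f z) unitDisc := by
  have := conj_int hφ (h.csumm hz)
  refine this.congr_fun (fun ζ _ => (bInt_eq f z ζ).symm) uD_meas

theorem bProj_hasSum (h : Nice ω) {f : ℂ → ℂ} (hφ : IntegrableOn (fun ζ => f ζ * (ω ‖ζ‖ : ℂ)) unitDisc)
    {z : ℂ} (hz : ‖z‖ < 1) :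
    HasSum (fun n => ((an ω n : ℝ) : ℂ) * z ^ n * bet ω f n) (bProj ω f z) := by
  have := (conj_swap hφ (h.csumm hz)).mul_left (Real.pi : ℂ)⁻¹
  unfold bProj
  simp_rw [bInt_eq]
  refine this.congr_fun ?_
  intro n
  unfold bet
  ring

theorem bet_bdd {f : ℂ → ℂ} (hφ : IntegrableOn (fun ζ => f ζ * (ω ‖ζ‖ : ℂ)) unitDisc) :
    ∃ b : ℝ, 0 ≤ b ∧ ∀ n, ‖bet ω f n‖ ≤ b := by
  refine ⟨‖(Real.pi : ℂ)⁻¹‖ * ∫ ζ in unitDisc, ‖f ζ * (ω ‖ζ‖ : ℂ)‖, ?_, fun n => ?_⟩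
  · have : 0 ≤ ∫ ζ in unitDisc, ‖f ζ * (ω ‖ζ‖ : ℂ)‖ := integral_nonneg fun _ => norm_nonneg _
    positivity
  · unfold bet
    rw [norm_mul]
    refine mul_le_mul_of_nonneg_left ?_ (norm_nonneg _)
    refine norm_integral_le_of_norm_le hφ.norm ?_
    filter_upwards [ae_restrict_mem uD_meas] with ζ hζ
    rw [norm_mul _ (_ ^ n), norm_pow, RCLike.norm_conj]
    exact mul_le_of_le_one_right (norm_nonneg _) (pow_le_one₀ (norm_nonneg _) (mem_uD.1 hζ).le)

theorem bProj_deriv (h : Nice ω) {f : ℂ → ℂ} (hφ : IntegrableOn (fun ζ => f ζ * (ω ‖ζ‖ : ℂ)) unitDisc)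
    {z : ℂ} (hz : ‖z‖ < 1) :
    HasDerivAt (bProj ω f) ((Real.pi : ℂ)⁻¹ * ∫ ζ in unitDisc,
      (f ζ * (ω ‖ζ‖ : ℂ) * starRingEnd ℂ ζ) * Gk ω (z * starRingEnd ℂ ζ)) z := by
  obtain ⟨ρ, hρ1, hρ2⟩ := exists_between hz
  have hρ0 : 0 ≤ ρ := (norm_nonneg z).trans hρ1.le
  obtain ⟨b, hb0, hb⟩ := bet_bdd hφ
  set Fn : ℕ → ℂ → ℂ := fun n w => ((an ω n : ℝ) : ℂ) * w ^ n * bet ω f n with hFn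
  have hu : Summable fun n => an ω n * ρ ^ n * b := (h.an_summ hρ0 hρ2).mul_right b
  have hd : ∀ n, DifferentiableOn ℂ (Fn n) (Metric.ball 0 ρ) := fun n => by
    rw [hFn]; fun_prop
  have hle : ∀ n w, w ∈ Metric.ball (0:ℂ) ρ → ‖Fn n w‖ ≤ an ω n * ρ ^ n * b := by
    intro n w hw
    have hw' : ‖w‖ < ρ := by simpa using hw
    have := h.an_pos n
    rw [hFn]
    simp only [norm_mul, norm_pow, Complex.norm_of_nonneg this.le]
    gcongr
    exact hb n
  have hzm : z ∈ Metric.ball (0:ℂ) ρ := by simpa using hρ1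
  have D1 := differentiableOn_tsum_of_summable_norm hu hd Metric.isOpen_ball hle
  have D2 := hasSum_deriv_of_summable_norm hu hd Metric.isOpen_ball hle hzm
  have D3 := (D1.differentiableAt (Metric.isOpen_ball.mem_nhds hzm)).hasDerivAt
  have heq : bProj ω f =ᶠ[nhds z] fun w => ∑' n, Fn n w := by
    filter_upwards [Metric.isOpen_ball.mem_nhds hzm] with w hw
    have hw' : ‖w‖ < ρ := by simpa using hw
    exact (h.bProj_hasSum hφ (hw'.trans hρ2)).tsum_eq.symm
  have D4 := D3.congr_of_eventuallyEq heq
  suffices key : (Real.pi : ℂ)⁻¹ * ∫ ζ in unitDisc,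
      (f ζ * (ω ‖ζ‖ : ℂ) * starRingEnd ℂ ζ) * Gk ω (z * starRingEnd ℂ ζ) =
      deriv (fun w => ∑' n, Fn n w) z by
    rw [key]; exact D4
  -- identify derivative
  have hφ' : IntegrableOn (fun ζ => f ζ * (ω ‖ζ‖ : ℂ) * starRingEnd ℂ ζ) unitDisc := by
    refine hφ.mul_bdd (c := 1) (Continuous.aestronglyMeasurable (by fun_prop)) ?_
    filter_upwards [ae_restrict_mem uD_meas] with ζ hζ
    rw [RCLike.norm_conj]
    exact (mem_uD.1 hζ).le
  have E1 := (conj_swap hφ' (h.csumm' hz)).mul_left (Real.pi : ℂ)⁻¹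
  have E2 : ∀ ζ : ℂ, ∑' n : ℕ, ((((n:ℝ)+1) * an ω (n+1) : ℝ) : ℂ) * z ^ n * (starRingEnd ℂ ζ) ^ n
      = Gk ω (z * starRingEnd ℂ ζ) := by
    intro ζ
    unfold Gk
    refine tsum_congr fun n => ?_
    rw [mul_pow]; ring
  simp_rw [E2] at E1
  have dF : ∀ n, deriv (Fn n) z = ((an ω n : ℝ) : ℂ) * (n * z ^ (n-1)) * bet ω f n := by
    intro n
    exact (((hasDerivAt_pow n z).const_mul _).mul_const _).deriv
  simp_rw [dF] at D2
  have D5 := (hasSum_nat_add_iff' 1).2 D2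
  simp only [Finset.range_one, Finset.sum_singleton, Nat.cast_zero, zero_mul, mul_zero,
    sub_zero] at D5
  refine E1.unique ?_
  refine D5.congr_fun ?_
  intro n
  unfold bet
  have : ∀ ζ : ℂ, f ζ * (ω ‖ζ‖ : ℂ) * (starRingEnd ℂ ζ) ^ (n+1) =
      f ζ * (ω ‖ζ‖ : ℂ) * starRingEnd ℂ ζ * (starRingEnd ℂ ζ) ^ n := fun ζ => by ring
  simp_rw [this]
  push_cast
  ring

end Nice


theorem polar_symm_eq (p : ℝ × ℝ) : Complex.polarCoord.symm p = (p.1 : ℂ) * cexp (I * p.2) := by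
  rw [Complex.polarCoord_symm_apply, mul_comm I, Complex.exp_mul_I, Complex.ofReal_cos,
    Complex.ofReal_sin]
  

theorem norm_polar (s θ : ℝ) (hs : 0 ≤ s) : ‖(s : ℂ) * cexp (I * θ)‖ = s := by
  rw [norm_mul, mul_comm I, Complex.norm_exp_ofReal_mul_I, Complex.norm_of_nonneg hs, mul_one]

theorem polar_disc (g : ℂ → ℝ≥0∞) : ∫⁻ ζ in unitDisc, g ζ =
    ∫⁻ p in (Ioo (0:ℝ) 1) ×ˢ (Ioo (-Real.pi) Real.pi),
      ENNReal.ofReal p.1 * g ((p.1 : ℂ) * cexp (I * p.2)) := by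
  rw [← lintegral_indicator uD_meas, ← Complex.lintegral_comp_polarCoord_symm, polarCoord_target,
    ← lintegral_indicator (measurableSet_Ioi.prod measurableSet_Ioo),
    ← lintegral_indicator (measurableSet_Ioo.prod measurableSet_Ioo)]
  congr 1
  ext p
  simp only [polar_symm_eq]
  by_cases h1 : 0 < p.1
  · by_cases h2 : p.2 ∈ Ioo (-Real.pi) Real.pi
    · by_cases h3 : p.1 < 1
      · have hA : p ∈ Ioi (0:ℝ) ×ˢ Ioo (-Real.pi) Real.pi := ⟨h1, h2⟩
        have hB : p ∈ Ioo (0:ℝ) 1 ×ˢ Ioo (-Real.pi) Real.pi := ⟨⟨h1, h3⟩, h2⟩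
        have hC : (p.1 : ℂ) * cexp (I * p.2) ∈ unitDisc :=
          mem_uD.2 (by rw [norm_polar _ _ h1.le]; exact h3)
        rw [indicator_of_mem hA, indicator_of_mem hB, indicator_of_mem hC, smul_eq_mul]
      · have hA : p ∈ Ioi (0:ℝ) ×ˢ Ioo (-Real.pi) Real.pi := ⟨h1, h2⟩
        have hB : p ∉ Ioo (0:ℝ) 1 ×ˢ Ioo (-Real.pi) Real.pi := by
          rintro ⟨⟨_, h⟩, _⟩; exact h3 h
        have hC : (p.1 : ℂ) * cexp (I * p.2) ∉ unitDisc := by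
          rw [mem_uD, norm_polar _ _ h1.le]; exact h3
        rw [indicator_of_mem hA, indicator_of_notMem hB, indicator_of_notMem hC, smul_zero]
    · rw [indicator_of_notMem (by rintro ⟨_, h⟩; exact h2 h), indicator_of_notMem (by rintro ⟨_, h⟩; exact h2 h)]
  · rw [indicator_of_notMem (by rintro ⟨h, _⟩; exact h1 h), indicator_of_notMem (by rintro ⟨⟨h, _⟩, _⟩; exact h1 h)]

theorem polar_le (g : ℂ → ℝ≥0∞) : ∫⁻ ζ in unitDisc, g ζ ≤
    ∫⁻ s in Ioo (0:ℝ) 1, ENNReal.ofReal s *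
      ∫⁻ θ in Ioo (-Real.pi) Real.pi, g ((s : ℂ) * cexp (I * θ)) := by
  rw [polar_disc, Measure.volume_eq_prod, ← Measure.prod_restrict]
  refine (lintegral_prod_le _).trans ?_
  refine lintegral_mono fun s => ?_
  rw [lintegral_const_mul' _ _ ENNReal.ofReal_ne_top]


namespace Nice

theorem J_aux {ω : ℝ → ℝ} (h : Nice ω) {K c D q ε : ℝ} (hK : 1 < K) (hq : 1 < q) (hD1 : 1 ≤ D) (hqc : q * q = c)
    (hε : 0 < ε) (hqe : K ^ ε = q)
    (hc : ∀ r ∈ Ico (0:ℝ) 1, c * tl ω (1 - (1 - r) / K) ≤ tl ω r)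
    (hD : ∀ d, 0 < d → d ≤ 1 → tl ω (1-d) ≤ D * tl ω (1-d/K)) {r : ℝ} (hr0 : 0 ≤ r) (hr1 : r < 1) :
    ∫⁻ s in Ioo (0:ℝ) 1, ENNReal.ofReal (ω s * (1-s)^(-ε) / tl ω (r*s)) ≤
      ENNReal.ofReal ((D*q*q/(q-1) + q*q*(1-1/q)⁻¹) * (1-r)^(-ε)) := by
  set Ω : ℕ → ℝ := fun k => tl ω (1 - 1/K^k) with hΩ
  have hK0 : 0 < K := by linarith
  have hq0 : 0 < q := by linarith
  have hKk : ∀ k : ℕ, 1 ≤ K^k := fun k => one_le_pow₀ hK.le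
  have hkm : ∀ k : ℕ, 1 - 1/K^k ∈ Ico (0:ℝ) 1 := by
    intro k
    have h1 := hKk k
    have : 0 < 1/K^k := by positivity
    have : 1/K^k ≤ 1 := by rw [div_le_one (by positivity)]; exact h1
    constructor <;> linarith
  have Ωpos : ∀ k, 0 < Ω k := fun k => h.pos _ (hkm k)
  have Ωc : ∀ k, c * Ω (k+1) ≤ Ω k := by
    intro k
    have := hc _ (hkm k)
    have e : 1 - (1 - (1 - 1/K^k))/K = 1 - 1/K^(k+1) := by rw [pow_succ]; field_simp; ring
    rw [e] at this; exact this
  have ΩD : ∀ k, Ω k ≤ D * Ω (k+1) := by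
    intro k
    have h1 := hKk k
    have := hD (1/K^k) (by positivity) (by rw [div_le_one (by positivity)]; exact h1)
    have e : 1 - (1/K^k)/K = 1 - 1/K^(k+1) := by rw [pow_succ]; field_simp
    rw [e] at this; exact this
  have Ωit : ∀ i j, c^j * Ω (i+j) ≤ Ω i := by
    intro i j
    induction j with
    | zero => simp
    | succ j ih =>
      calc c^(j+1) * Ω (i+(j+1)) = c^j * (c * Ω (i+j+1)) := by rw [pow_succ, add_assoc]; ring
        _ ≤ c^j * Ω (i+j) := mul_le_mul_of_nonneg_left (Ωc _) (by rw [← hqc]; positivity)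
        _ ≤ _ := ih
  have exk : ∀ s : ℝ, 0 ≤ s → s < 1 → ∃ k : ℕ, 1 - 1/K^k ≤ s ∧ s < 1 - 1/K^(k+1) := by
    intro s hs0 hs1
    have h1 : 1 ≤ 1/(1-s) := by rw [le_div_iff₀ (by linarith)]; linarith
    obtain ⟨k, hk1, hk2⟩ := exists_nat_pow_near h1 hK
    refine ⟨k, ?_, ?_⟩
    · have := hKk k
      rw [le_div_iff₀ (by linarith)] at hk1
      have : 1 - s ≤ 1/K^k := by rw [le_div_iff₀ (by positivity)]; linarith
      linarith
    · have := hKk (k+1)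
      rw [div_lt_iff₀ (by linarith)] at hk2
      have : 1/K^(k+1) < 1 - s := by rw [div_lt_iff₀ (by positivity)]; linarith
      linarith
  have hqk : ∀ k : ℕ, (1/K^k : ℝ)^(-ε) = q^k := by
    intro k
    rw [one_div, Real.inv_rpow (by positivity), Real.rpow_neg (by positivity), inv_inv, ← hqe,
      ← Real.rpow_natCast, ← Real.rpow_natCast, ← Real.rpow_mul hK0.le, ← Real.rpow_mul hK0.le, mul_comm]
  obtain ⟨m, hm1, hm2⟩ := exk r hr0 hr1
  set a : ℕ → ℝ := fun k => q^(k+1) * min (1/Ω (m+1)) (1/Ω (k+1)) with ha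
  have a0 : ∀ k, 0 ≤ a k := fun k => mul_nonneg (by positivity)
    (le_min (one_div_nonneg.2 (Ωpos _).le) (one_div_nonneg.2 (Ωpos _).le))
  have step1 : ∀ s ∈ Ioo (0:ℝ) 1, ENNReal.ofReal (ω s * (1-s)^(-ε) / tl ω (r*s)) ≤
      ∑' k, ENNReal.ofReal (a k) * (Ico (1 - 1/K^k) 1).indicator (fun s => ENNReal.ofReal (ω s)) s := by
    intro s hs
    obtain ⟨k, hk1, hk2⟩ := exk s hs.1.le hs.2
    refine le_trans ?_ (ENNReal.le_tsum k)
    rw [indicator_of_mem (by exact ⟨hk1, hs.2⟩), ← ENNReal.ofReal_mul (a0 k)]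
    refine ENNReal.ofReal_le_ofReal ?_
    have e1 : (1-s)^(-ε) ≤ q^(k+1) := by
      rw [← hqk]
      refine Real.rpow_le_rpow_of_nonpos (by positivity) (by linarith) (by linarith)
    have hrs : r * s ∈ Ico (0:ℝ) 1 := ⟨by have := hs.1; positivity, by nlinarith [hs.1, hs.2]⟩
    have e2 : 1 / tl ω (r*s) ≤ min (1/Ω (m+1)) (1/Ω (k+1)) := by
      refine le_min ?_ ?_
      · refine one_div_le_one_div_of_le (Ωpos _) (h.tl_anti ?_)
        nlinarith [hs.1, hs.2]
      · refine one_div_le_one_div_of_le (Ωpos _) (h.tl_anti ?_)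
        nlinarith [hs.1, hs.2]
    have e3 : 0 ≤ 1 / tl ω (r*s) := one_div_nonneg.2 (h.pos _ hrs).le
    calc ω s * (1-s)^(-ε) / tl ω (r*s) = ((1-s)^(-ε) * (1 / tl ω (r*s))) * ω s := by ring
      _ ≤ (q^(k+1) * min (1/Ω (m+1)) (1/Ω (k+1))) * ω s :=
        mul_le_mul_of_nonneg_right (mul_le_mul e1 e2 e3 (by positivity)) (h.nn s)
  have int1 : ∀ k, ∫⁻ s in Ioo (0:ℝ) 1, (Ico (1 - 1/K^k) 1).indicator (fun s => ENNReal.ofReal (ω s)) s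
      ≤ ENNReal.ofReal (Ω k) := by
    intro k
    refine (setLIntegral_le_lintegral _ _).trans ?_
    rw [lintegral_indicator measurableSet_Ico, hΩ]
    simp only [tl]
    rw [intervalIntegral.integral_of_le (hkm k).2.le, ← integral_Ico_eq_integral_Ioc,
      ofReal_integral_eq_lintegral_ofReal h.int.integrableOn (Filter.Eventually.of_forall h.nn)]
  calc _ ≤ ∫⁻ s in Ioo (0:ℝ) 1, ∑' k, ENNReal.ofReal (a k) *
        (Ico (1 - 1/K^k) 1).indicator (fun s => ENNReal.ofReal (ω s)) s :=
        setLIntegral_mono' measurableSet_Ioo step1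
    _ = ∑' k, ∫⁻ s in Ioo (0:ℝ) 1, ENNReal.ofReal (a k) *
        (Ico (1 - 1/K^k) 1).indicator (fun s => ENNReal.ofReal (ω s)) s := by
        refine lintegral_tsum fun k => ?_
        exact ((h.meas.ennreal_ofReal.indicator measurableSet_Ico).const_mul _).aemeasurable
    _ ≤ ∑' k, ENNReal.ofReal (a k * Ω k) := by
        refine ENNReal.tsum_le_tsum fun k => ?_
        rw [lintegral_const_mul' _ _ ENNReal.ofReal_ne_top, ENNReal.ofReal_mul (a0 k)]
        exact mul_le_mul_right (int1 k) _
    _ = ∑ k ∈ Finset.range (m+1), ENNReal.ofReal (a k * Ω k) +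
          ∑' j, ENNReal.ofReal (a (j+(m+1)) * Ω (j+(m+1))) :=
        (ENNReal.summable.sum_add_tsum_nat_add' ).symm
    _ ≤ ∑ k ∈ Finset.range (m+1), ENNReal.ofReal (D * q * q^k) +
          ∑' j, ENNReal.ofReal (q^(m+2) * (1/q)^j) := by
        refine add_le_add (Finset.sum_le_sum fun k _ => ENNReal.ofReal_le_ofReal ?_)
          (ENNReal.tsum_le_tsum fun j => ENNReal.ofReal_le_ofReal ?_)
        · calc a k * Ω k ≤ (q^(k+1) * (1/Ω (k+1))) * Ω k :=
                mul_le_mul_of_nonneg_right (mul_le_mul_of_nonneg_left (min_le_right _ _) (by positivity)) (Ωpos k).le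
            _ ≤ (q^(k+1) * (1/Ω (k+1))) * (D * Ω (k+1)) :=
                mul_le_mul_of_nonneg_left (ΩD k) (mul_nonneg (by positivity) (one_div_nonneg.2 (Ωpos _).le))
            _ = _ := by have := (Ωpos (k+1)).ne'; rw [pow_succ]; field_simp
        · have h1 := Ωit (m+1) j
          have hcj : c^j = q^j*q^j := by rw [← hqc, mul_pow]
          calc a (j+(m+1)) * Ω (j+(m+1)) ≤ (q^(j+(m+1)+1) * (1/Ω (m+1))) * Ω (j+(m+1)) :=
                mul_le_mul_of_nonneg_right (mul_le_mul_of_nonneg_left (min_le_left _ _) (by positivity)) (Ωpos _).le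
            _ ≤ (q^(j+(m+1)+1) * (1/Ω (m+1))) * (Ω (m+1) / c^j) := by
                refine mul_le_mul_of_nonneg_left ?_ (mul_nonneg (by positivity) (one_div_nonneg.2 (Ωpos _).le))
                rw [le_div_iff₀ (by rw [hcj]; positivity), add_comm j, mul_comm]; exact h1
            _ = _ := by
                have := (Ωpos (m+1)).ne'
                rw [hcj, one_div_pow, show j+(m+1)+1 = (m+2)+j by ring, pow_add]; field_simp
    _ ≤ ENNReal.ofReal (D*q*q/(q-1) * q^m) + ENNReal.ofReal (q*q*(1-1/q)⁻¹ * q^m) := by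
        have hq1 : 1/q < 1 := by rw [div_lt_one hq0]; exact hq
        refine add_le_add ?_ ?_
        · rw [← ENNReal.ofReal_sum_of_nonneg (fun k _ => by positivity)]
          refine ENNReal.ofReal_le_ofReal ?_
          rw [← Finset.mul_sum, geom_sum_eq hq.ne']
          have : 0 < q - 1 := by linarith
          have e : D*q*q/(q-1) * q^m = D*q*(q^(m+1)/(q-1)) := by rw [pow_succ]; ring
          rw [e]
          refine mul_le_mul_of_nonneg_left ?_ (by positivity)
          exact div_le_div_of_nonneg_right (by linarith) this.le
        · have hs := (hasSum_geometric_of_lt_one (by positivity) hq1).mul_left (q^(m+2))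
          rw [← ENNReal.ofReal_tsum_of_nonneg (fun k => by positivity) hs.summable, hs.tsum_eq]
          refine ENNReal.ofReal_le_ofReal (le_of_eq ?_)
          rw [pow_add]; ring
    _ ≤ _ := by
        have hq1 : 1/q < 1 := by rw [div_lt_one hq0]; exact hq
        have : 0 < q - 1 := by linarith
        have : 0 < 1 - 1/q := by linarith
        rw [← ENNReal.ofReal_add (by positivity) (by positivity), ← add_mul]
        refine ENNReal.ofReal_le_ofReal (mul_le_mul_of_nonneg_left ?_ (by positivity))
        rw [← hqk]
        exact Real.rpow_le_rpow_of_nonpos (by linarith) (by linarith) (by linarith)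

theorem J_lemma {ω : ℝ → ℝ} (h : Nice ω) (hh : Dhat ω) (hc : Dcheck ω) : ∃ ε E : ℝ, 0 < ε ∧ 0 < E ∧
    ∀ r, 0 ≤ r → r < 1 → ∫⁻ s in Ioo (0:ℝ) 1, ENNReal.ofReal (ω s * (1-s)^(-ε) / tl ω (r*s)) ≤
      ENNReal.ofReal (E * (1-r)^(-ε)) := by
  obtain ⟨C, hC⟩ := hh
  obtain ⟨K, c, hK, hc1, hc⟩ := hc
  obtain ⟨D, hD1, hD⟩ := h.dhat_scale hC K (by linarith)
  have hlK : 0 < Real.log K := Real.log_pos hK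
  have hlc : 0 < Real.log c := Real.log_pos hc1
  have hq : 1 < √c := by rw [Real.lt_sqrt (by norm_num)]; simpa using hc1
  have hq1 : 1/√c < 1 := by rw [div_lt_one (by linarith)]; exact hq
  have : 0 < √c - 1 := by linarith
  have : 0 < 1 - 1/√c := by linarith
  refine ⟨Real.log c / (2 * Real.log K), (D*√c*√c/(√c-1) + √c*√c*(1-1/√c)⁻¹), by positivity, by positivity, ?_⟩
  intro r hr0 hr1
  refine h.J_aux hK hq hD1 (Real.mul_self_sqrt (by linarith)) (by positivity) ?_ hc hD hr0 hr1
  rw [Real.rpow_def_of_pos (by linarith), Real.sqrt_eq_rpow, Real.rpow_def_of_pos (by linarith)]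
  congr 1
  field_simp

end Nice


namespace Nice

theorem Gk_circ_cont {ω : ℝ → ℝ} (h : Nice ω) {q : ℂ} (hq : ‖q‖ < 1) :
    Continuous fun θ : ℝ => Gk ω (q * cexp (-(I * θ))) := by
  have := (gen_cont (h.csumm' hq)).comp_continuous (f := fun θ : ℝ => cexp (-(I * θ)))
    (by fun_prop) (fun θ => by simp [norm_exp_aux])
  refine this.congr fun θ => ?_
  unfold Gk
  refine tsum_congr fun n => ?_
  rw [mul_pow]; ring

theorem Gk_lint {ω : ℝ → ℝ} (h : Nice ω) {B : ℝ} (hB : ∀ q : ℂ, ‖q‖ < 1 →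
      ∫ θ in (-Real.pi)..Real.pi, ‖Gk ω (q * cexp (-(I * θ)))‖ ≤ B / ((1 - ‖q‖) * tl ω ‖q‖))
    {q : ℂ} (hq : ‖q‖ < 1) :
    ∫⁻ θ in Ioo (-Real.pi) Real.pi, ENNReal.ofReal ‖Gk ω (q * cexp (-(I * θ)))‖ ≤
      ENNReal.ofReal (B / ((1 - ‖q‖) * tl ω ‖q‖)) := by
  have hc := (h.Gk_circ_cont hq).norm
  have hpi : -Real.pi ≤ Real.pi := by linarith [Real.pi_pos]
  have := ENNReal.ofReal_le_ofReal (hB q hq)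
  rw [intervalIntegral.integral_of_le hpi, integral_Ioc_eq_integral_Ioo,
    ofReal_integral_eq_lintegral_ofReal] at this
  · exact this
  · exact (hc.integrableOn_Icc).mono_set Ioo_subset_Icc_self
  · exact Filter.Eventually.of_forall fun _ => norm_nonneg _

theorem phi_lint {ω : ℝ → ℝ} (h : Nice ω) {ε E S : ℝ} (hS : 0 ≤ S)
    (hJ : ∀ r, 0 ≤ r → r < 1 → ∫⁻ s in Ioo (0:ℝ) 1, ENNReal.ofReal (ω s * (1-s)^(-ε) / tl ω (r*s)) ≤
      ENNReal.ofReal (E * (1-r)^(-ε)))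
    {f : ℂ → ℂ} (hfb : ∀ᵐ ζ ∂(volume.restrict unitDisc), ‖f ζ‖ ≤ S * (1 - ‖ζ‖)^(-ε)) :
    ∫⁻ ζ in unitDisc, ENNReal.ofReal ‖f ζ * (ω ‖ζ‖ : ℂ)‖ ≤
      ENNReal.ofReal (2 * Real.pi * S * tl ω 0 * E) := by
  have h0 : 0 < tl ω 0 := h.pos 0 (by simp)
  have hpi := Real.pi_pos
  calc ∫⁻ ζ in unitDisc, ENNReal.ofReal ‖f ζ * (ω ‖ζ‖ : ℂ)‖ ≤
        ∫⁻ ζ in unitDisc, ENNReal.ofReal (S * (1 - ‖ζ‖)^(-ε) * ω ‖ζ‖) := by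
        refine lintegral_mono_ae ?_
        filter_upwards [hfb] with ζ hζ
        refine ENNReal.ofReal_le_ofReal ?_
        rw [norm_mul, Complex.norm_of_nonneg (h.nn _)]
        exact mul_le_mul_of_nonneg_right hζ (h.nn _)
    _ ≤ ∫⁻ s in Ioo (0:ℝ) 1, ENNReal.ofReal s *
      ∫⁻ θ in Ioo (-Real.pi) Real.pi, ENNReal.ofReal (S * (1 - ‖(s : ℂ) * cexp (I * θ)‖)^(-ε) *
        ω ‖(s : ℂ) * cexp (I * θ)‖) := polar_le _
    _ ≤ ∫⁻ s in Ioo (0:ℝ) 1, ENNReal.ofReal (2 * Real.pi * S * tl ω 0) *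
        ENNReal.ofReal (ω s * (1-s)^(-ε) / tl ω (0*s)) := by
        refine setLIntegral_mono' measurableSet_Ioo fun s hs => ?_
        have h1 : 0 ≤ (1-s)^(-ε) := Real.rpow_nonneg (by linarith [hs.2]) _
        have h2 := h.nn s
        simp_rw [norm_polar _ _ hs.1.le]
        rw [setLIntegral_const, Real.volume_Ioo, zero_mul, ← ENNReal.ofReal_mul (by positivity),
          ← ENNReal.ofReal_mul hs.1.le, ← ENNReal.ofReal_mul (by positivity)]
        refine ENNReal.ofReal_le_ofReal ?_
        have e : 2 * Real.pi * S * tl ω 0 * (ω s * (1-s)^(-ε) / tl ω 0) =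
          1 * (S * (1-s)^(-ε) * ω s * (Real.pi - -Real.pi)) := by field_simp; ring
        rw [e]
        refine mul_le_mul_of_nonneg_right hs.2.le ?_
        have : 0 ≤ Real.pi - -Real.pi := by linarith
        positivity
    _ ≤ _ := by
        rw [lintegral_const_mul' _ _ ENNReal.ofReal_ne_top,
          ENNReal.ofReal_mul (p := 2 * Real.pi * S * tl ω 0) (by positivity)]
        have := hJ 0 le_rfl one_pos
        rw [sub_zero, Real.one_rpow, mul_one] at this
        exact mul_le_mul_right this _

theorem deriv_lint {ω : ℝ → ℝ} (h : Nice ω) {ε E S B : ℝ} (hS : 0 ≤ S) (hB0 : 0 < B)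
    (hJ : ∀ r, 0 ≤ r → r < 1 → ∫⁻ s in Ioo (0:ℝ) 1, ENNReal.ofReal (ω s * (1-s)^(-ε) / tl ω (r*s)) ≤
      ENNReal.ofReal (E * (1-r)^(-ε)))
    (hB : ∀ q : ℂ, ‖q‖ < 1 →
      ∫ θ in (-Real.pi)..Real.pi, ‖Gk ω (q * cexp (-(I * θ)))‖ ≤ B / ((1 - ‖q‖) * tl ω ‖q‖))
    {f : ℂ → ℂ} (hfb : ∀ᵐ ζ ∂(volume.restrict unitDisc), ‖f ζ‖ ≤ S * (1 - ‖ζ‖)^(-ε))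
    {z : ℂ} (hz : ‖z‖ < 1) :
    ∫⁻ ζ in unitDisc, ENNReal.ofReal ‖(f ζ * (ω ‖ζ‖ : ℂ) * starRingEnd ℂ ζ) * Gk ω (z * starRingEnd ℂ ζ)‖ ≤
      ENNReal.ofReal (S * B / (1-‖z‖) * (E * (1-‖z‖)^(-ε))) := by
  have hz' : 0 < 1 - ‖z‖ := by linarith
  calc _ ≤ ∫⁻ ζ in unitDisc, ENNReal.ofReal (S * (1 - ‖ζ‖)^(-ε) * ω ‖ζ‖) *
          ENNReal.ofReal ‖Gk ω (z * starRingEnd ℂ ζ)‖ := by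
        refine lintegral_mono_ae ?_
        filter_upwards [hfb, ae_restrict_mem uD_meas] with ζ hζ hd
        have hd' := mem_uD.1 hd
        have h1 : 0 ≤ (1-‖ζ‖)^(-ε) := Real.rpow_nonneg (by linarith) _
        have h2 := h.nn ‖ζ‖
        rw [← ENNReal.ofReal_mul (by positivity)]
        refine ENNReal.ofReal_le_ofReal ?_
        rw [norm_mul, norm_mul, norm_mul, Complex.norm_of_nonneg (h.nn _), RCLike.norm_conj]
        refine mul_le_mul_of_nonneg_right ?_ (norm_nonneg _)
        calc ‖f ζ‖ * ω ‖ζ‖ * ‖ζ‖ ≤ ‖f ζ‖ * ω ‖ζ‖ := mul_le_of_le_one_right (by positivity) hd'.le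
          _ ≤ _ := mul_le_mul_of_nonneg_right hζ (h.nn _)
    _ ≤ ∫⁻ s in Ioo (0:ℝ) 1, ENNReal.ofReal s *
      ∫⁻ θ in Ioo (-Real.pi) Real.pi, ENNReal.ofReal (S * (1 - ‖(s : ℂ) * cexp (I * θ)‖)^(-ε) *
        ω ‖(s : ℂ) * cexp (I * θ)‖) * ENNReal.ofReal ‖Gk ω (z * starRingEnd ℂ ((s : ℂ) * cexp (I * θ)))‖ :=
        polar_le _
    _ ≤ ∫⁻ s in Ioo (0:ℝ) 1, ENNReal.ofReal (S * B / (1-‖z‖)) *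
        ENNReal.ofReal (ω s * (1-s)^(-ε) / tl ω (‖z‖*s)) := by
        refine setLIntegral_mono' measurableSet_Ioo fun s hs => ?_
        have h1 : 0 ≤ (1-s)^(-ε) := Real.rpow_nonneg (by linarith [hs.2]) _
        have h2 := h.nn s
        simp_rw [norm_polar _ _ hs.1.le]
        have hn : ‖z * (s:ℂ)‖ = ‖z‖ * s := by rw [norm_mul, Complex.norm_of_nonneg hs.1.le]
        have hzs : ‖z‖ * s ≤ ‖z‖ := mul_le_of_le_one_right (norm_nonneg _) hs.2.le
        have e : ∀ θ : ℝ, z * starRingEnd ℂ ((s : ℂ) * cexp (I * θ)) = (z * s) * cexp (-(I * θ)) := by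
          intro θ
          rw [map_mul, Complex.conj_ofReal, ← Complex.exp_conj, map_mul, Complex.conj_I,
            Complex.conj_ofReal]
          ring_nf
        simp_rw [e]
        have hT : 0 < tl ω (‖z‖*s) := h.pos _ ⟨mul_nonneg (norm_nonneg _) hs.1.le, by linarith⟩
        rw [lintegral_const_mul' _ _ ENNReal.ofReal_ne_top]
        refine (mul_le_mul_right (mul_le_mul_right (h.Gk_lint hB (by rw [hn]; linarith)) _) _).trans ?_
        rw [hn, ← ENNReal.ofReal_mul (by positivity), ← ENNReal.ofReal_mul hs.1.le,
          ← ENNReal.ofReal_mul (by positivity)]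
        refine ENNReal.ofReal_le_ofReal ?_
        have hp : 0 < 1 - ‖z‖*s := by linarith
        calc s * (S * (1-s)^(-ε) * ω s * (B / ((1 - ‖z‖*s) * tl ω (‖z‖*s)))) ≤
            1 * (S * (1-s)^(-ε) * ω s * (B / ((1 - ‖z‖*s) * tl ω (‖z‖*s)))) :=
              mul_le_mul_of_nonneg_right hs.2.le (by positivity)
          _ ≤ 1 * (S * (1-s)^(-ε) * ω s * (B / ((1 - ‖z‖) * tl ω (‖z‖*s)))) := by
              refine mul_le_mul_of_nonneg_left (mul_le_mul_of_nonneg_left ?_ (by positivity)) zero_le_one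
              refine div_le_div_of_nonneg_left hB0.le (by positivity) ?_
              exact mul_le_mul_of_nonneg_right (by linarith) hT.le
          _ = _ := by field_simp
    _ ≤ _ := by
        rw [lintegral_const_mul' _ _ ENNReal.ofReal_ne_top, ENNReal.ofReal_mul (by positivity)]
        exact mul_le_mul_right (hJ _ (norm_nonneg _) hz) _

theorem norm_int_le {g : ℂ → ℂ} {c : ℝ} (hc : 0 ≤ c)
    (hg : ∫⁻ ζ in unitDisc, ENNReal.ofReal ‖g ζ‖ ≤ ENNReal.ofReal c) :
    ‖∫ ζ in unitDisc, g ζ‖ ≤ c := by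
  have := norm_integral_le_lintegral_norm (μ := volume.restrict unitDisc) g
  exact this.trans (ENNReal.toReal_le_of_le_ofReal hc hg)

/-- The growth estimate for the projection. -/
theorem proj_bound {ω : ℝ → ℝ} (h : Nice ω) (hh : Dhat ω) (hc : Dcheck ω) : ∃ ε M : ℝ, 0 < ε ∧ 0 < M ∧
    ∀ (f : ℂ → ℂ) (S : ℝ), 0 ≤ S → AEStronglyMeasurable f (volume.restrict unitDisc) →
    (∀ᵐ ζ ∂(volume.restrict unitDisc), ‖f ζ‖ ≤ S * (1 - ‖ζ‖)^(-ε)) →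
    IntegrableOn (fun ζ => f ζ * (ω ‖ζ‖ : ℂ)) unitDisc ∧
    ∀ z, ‖z‖ < 1 → ‖bProj ω f z‖ ≤ M * S * (1 - ‖z‖)^(-ε) := by
  obtain ⟨ε, E, hε, hE, hJ⟩ := h.J_lemma hh hc
  obtain ⟨C, hC⟩ := hh
  obtain ⟨B, hB0, hB⟩ := h.Gk_L1 hC
  have hpi := Real.pi_pos
  have h0 : 0 < tl ω 0 := h.pos 0 (by simp)
  have ha0 := h.an_pos 0
  refine ⟨ε, an ω 0 * (2 * tl ω 0 * E) + Real.pi⁻¹ * (B*E) / ε, hε, by positivity, ?_⟩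
  intro f S hS hfm hfb
  have hp := h.phi_lint hS hJ hfb
  have hφ : IntegrableOn (fun ζ => f ζ * (ω ‖ζ‖ : ℂ)) unitDisc := by
    refine ⟨hfm.mul ?_, ?_⟩
    · exact (Complex.measurable_ofReal.comp (h.meas.comp measurable_norm)).aestronglyMeasurable
    · rw [hasFiniteIntegral_iff_norm]
      exact hp.trans_lt ENNReal.ofReal_lt_top
  refine ⟨hφ, ?_⟩
  have npi : ‖(Real.pi : ℂ)⁻¹‖ = Real.pi⁻¹ := by
    rw [norm_inv, Complex.norm_of_nonneg hpi.le]
  -- value at zero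
  have hz0 : ‖bProj ω f 0‖ ≤ an ω 0 * (2 * tl ω 0 * E) * S := by
    have hs := h.bProj_hasSum hφ (z := 0) (by simp)
    have h1 : bProj ω f 0 = (an ω 0 : ℂ) * bet ω f 0 := by
      refine hs.unique ?_
      have := hasSum_single (f := fun n => ((an ω n : ℝ) : ℂ) * (0:ℂ) ^ n * bet ω f n) 0
        (fun n hn => by simp [hn])
      simpa using this
    rw [h1, norm_mul, Complex.norm_of_nonneg ha0.le, mul_assoc]
    refine mul_le_mul_of_nonneg_left ?_ ha0.le
    unfold bet
    rw [norm_mul, npi]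
    have := norm_int_le (by positivity) hp
    simp only [pow_zero, mul_one]
    calc _ ≤ Real.pi⁻¹ * (2 * Real.pi * S * tl ω 0 * E) := mul_le_mul_of_nonneg_left this (by positivity)
      _ = _ := by field_simp
  intro z hz
  set D := Real.pi⁻¹ * (B*E) * S with hD
  have hD0 : 0 ≤ D := by positivity
  -- derivative
  set g' : ℂ → ℂ := fun w => (Real.pi : ℂ)⁻¹ * ∫ ζ in unitDisc,
      (f ζ * (ω ‖ζ‖ : ℂ) * starRingEnd ℂ ζ) * Gk ω (w * starRingEnd ℂ ζ) with hg'
  have hd : ∀ w, ‖w‖ < 1 → ‖g' w‖ ≤ D * (1-‖w‖)^(-ε-1) := by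
    intro w hw
    have hw' : 0 < 1 - ‖w‖ := by linarith
    rw [hg']
    simp only []
    rw [norm_mul, npi]
    have := norm_int_le (by positivity) (h.deriv_lint hS hB0 hJ hB hfb hw)
    calc _ ≤ Real.pi⁻¹ * (S * B / (1-‖w‖) * (E * (1-‖w‖)^(-ε))) :=
          mul_le_mul_of_nonneg_left this (by positivity)
      _ = _ := by rw [Real.rpow_sub hw', Real.rpow_one, hD]; ring
  have hzt : ∀ t ∈ Icc (0:ℝ) 1, ‖(t:ℂ) * z‖ = t * ‖z‖ := fun t ht => by
    rw [norm_mul, Complex.norm_of_nonneg ht.1]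
  have hzt1 : ∀ t ∈ Icc (0:ℝ) 1, t * ‖z‖ < 1 := fun t ht =>
    (mul_le_of_le_one_left (norm_nonneg _) ht.2).trans_lt hz
  have hF : ∀ t ∈ Icc (0:ℝ) 1, HasDerivAt (fun t : ℝ => bProj ω f ((t:ℂ) * z)) (g' (t*z) * z) t := by
    intro t ht
    have h1 := h.bProj_deriv hφ (z := (t:ℂ)*z) (by rw [hzt t ht]; exact hzt1 t ht)
    have h2 : HasDerivAt (fun t : ℝ => (t:ℂ) * z) z t := by
      simpa using (Complex.ofRealCLM.hasDerivAt (x := t)).mul_const z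
    exact HasDerivAt.comp (h₂ := bProj ω f) (h := fun t : ℝ => (t:ℂ) * z) t h1 h2
  have hG : ∀ t ∈ Icc (0:ℝ) 1, HasDerivAt (fun t : ℝ => ‖bProj ω f 0‖ + D/ε * ((1 - t*‖z‖)^(-ε) - 1))
      (D * (1-t*‖z‖)^(-ε-1) * ‖z‖) t := by
    intro t ht
    have hp1 : 0 < 1 - t*‖z‖ := by linarith [hzt1 t ht]
    have h2 : HasDerivAt (fun t : ℝ => 1 - t * ‖z‖) (-‖z‖) t := by
      simpa using ((hasDerivAt_id t).mul_const ‖z‖).const_sub 1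
    have h3 := (((h2.rpow_const (p := -ε) (Or.inl hp1.ne')).sub_const 1).const_mul (D/ε)).const_add
      ‖bProj ω f 0‖
    refine h3.congr_deriv ?_
    field_simp
  have key := image_norm_le_of_norm_deriv_right_le_deriv_boundary' (a := (0:ℝ)) (b := 1)
    (f := fun t : ℝ => bProj ω f ((t:ℂ) * z)) (f' := fun t => g' (t*z) * z)
    (fun t ht => (hF t ht).continuousAt.continuousWithinAt)
    (fun t ht => (hF t ⟨ht.1, ht.2.le⟩).hasDerivWithinAt)
    (B := fun t : ℝ => ‖bProj ω f 0‖ + D/ε * ((1 - t*‖z‖)^(-ε) - 1))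
    (B' := fun t => D * (1-t*‖z‖)^(-ε-1) * ‖z‖) (by simp)
    (fun t ht => (hG t ht).continuousAt.continuousWithinAt)
    (fun t ht => (hG t ⟨ht.1, ht.2.le⟩).hasDerivWithinAt)
    (fun t ht => by
      have ht' : t ∈ Icc (0:ℝ) 1 := ⟨ht.1, ht.2.le⟩
      have := hd (t*z) (by rw [hzt t ht']; exact hzt1 t ht')
      rw [hzt t ht'] at this
      rw [norm_mul]
      exact mul_le_mul_of_nonneg_right this (norm_nonneg _))
    (x := 1) (by simp)
  simp only [Complex.ofReal_one, one_mul] at key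
  have hz' : 0 < 1 - ‖z‖ := by linarith
  have h1 : 1 ≤ (1-‖z‖)^(-ε) :=
    Real.one_le_rpow_of_pos_of_le_one_of_nonpos hz' (by linarith [norm_nonneg z]) (by linarith)
  have h2 : ‖bProj ω f 0‖ ≤ an ω 0 * (2 * tl ω 0 * E) * S * (1-‖z‖)^(-ε) :=
    hz0.trans (le_mul_of_one_le_right (by positivity) h1)
  have h3 : D/ε * ((1 - ‖z‖)^(-ε) - 1) ≤ D/ε * (1 - ‖z‖)^(-ε) :=
    mul_le_mul_of_nonneg_left (by linarith) (by positivity)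
  calc _ ≤ _ := key
    _ ≤ an ω 0 * (2 * tl ω 0 * E) * S * (1-‖z‖)^(-ε) + D/ε * (1 - ‖z‖)^(-ε) := add_le_add h2 h3
    _ = _ := by rw [hD]; ring

theorem exists_nu {ω : ℝ → ℝ} (h : Nice ω) (hh : Dhat ω) (hc : Dcheck ω) :
    ∃ ν : ℝ → ℝ, IsRadialWeight ν ∧ ProjBddH ω (tl ν) := by
  obtain ⟨ε, M, hε, hM, hb⟩ := h.proj_bound hh hc
  have ht : ∀ r ≤ (1:ℝ), tl (fun s => ε * (1-s)^(ε-1)) r = (1-r)^ε := by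
    intro r hr
    unfold tl
    rw [intervalIntegral.integral_const_mul, intervalIntegral.integral_comp_sub_left (fun s => s^(ε-1)),
      integral_rpow (Or.inl (by linarith)), sub_self, sub_add_cancel, Real.zero_rpow hε.ne']
    field_simp
    simp
  refine ⟨fun s => ε * (1-s)^(ε-1), ⟨?_, ?_, ?_⟩, M, hM, ?_⟩
  · intro s hs
    have := Real.rpow_nonneg (show 0 ≤ 1 - s by linarith [hs.2]) (ε-1)
    positivity
  · have h1 : IntervalIntegrable (fun s : ℝ => s^(ε-1)) volume 0 1 :=
      intervalIntegral.intervalIntegrable_rpow' (by linarith)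
    have h2 := ((h1.comp_sub_left 1).const_mul ε).symm
    simp only [sub_zero, sub_self] at h2
    rw [intervalIntegrable_iff_integrableOn_Ico_of_le zero_le_one] at h2
    exact h2
  · intro r hr
    rw [ht r hr.2.le]
    exact Real.rpow_pos_of_pos (by linarith [hr.2]) _
  · intro f hf hS
    set S := wSup (tl fun s => ε * (1-s)^(ε-1)) f with hSd
    have hfb : ∀ᵐ ζ ∂(volume.restrict unitDisc), ‖f ζ‖ ≤ S.toReal * (1 - ‖ζ‖)^(-ε) := by
      have := ENNReal.ae_le_essSup (μ := volume.restrict unitDisc)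
        (fun z => ENNReal.ofReal (‖f z‖ * tl (fun s => ε * (1-s)^(ε-1)) ‖z‖))
      filter_upwards [this, ae_restrict_mem uD_meas] with ζ h1 h2
      have h2' := mem_uD.1 h2
      rw [ht _ h2'.le] at h1
      have hp : 0 < 1 - ‖ζ‖ := by linarith
      have h3 := (ENNReal.ofReal_le_iff_le_toReal hS.ne).1 h1
      rw [Real.rpow_neg hp.le, ← div_eq_mul_inv, le_div_iff₀ (Real.rpow_pos_of_pos hp _)]
      exact h3
    obtain ⟨hφ, hz⟩ := hb f S.toReal ENNReal.toReal_nonneg hf hfb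
    refine ⟨fun z hz => h.bInt_int hφ (mem_uD.1 hz), fun z hz =>
      (h.bProj_deriv hφ (mem_uD.1 hz)).differentiableAt.differentiableWithinAt, ?_⟩
    refine essSup_le_of_ae_le _ ?_
    filter_upwards [ae_restrict_mem uD_meas] with z hzd
    have hz1 := mem_uD.1 hzd
    have hp : 0 < 1 - ‖z‖ := by linarith
    rw [ht _ hz1.le, ← ENNReal.ofReal_toReal hS.ne, ← ENNReal.ofReal_mul hM.le]
    refine ENNReal.ofReal_le_ofReal ?_
    calc _ ≤ (M * S.toReal * (1 - ‖z‖)^(-ε)) * (1 - ‖z‖)^ε :=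
          mul_le_mul_of_nonneg_right (hz z hz1) (Real.rpow_nonneg hp.le _)
      _ = _ := by rw [mul_assoc, ← Real.rpow_add hp]; simp

end Nice


theorem polar_disc_int (g : ℂ → ℂ) : ∫ ζ in unitDisc, g ζ =
    ∫ p in (Ioo (0:ℝ) 1) ×ˢ (Ioo (-Real.pi) Real.pi),
      (p.1 : ℂ) * g ((p.1 : ℂ) * cexp (I * p.2)) := by
  rw [← integral_indicator uD_meas, ← Complex.integral_comp_polarCoord_symm, polarCoord_target,
    ← integral_indicator (measurableSet_Ioi.prod measurableSet_Ioo),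
    ← integral_indicator (measurableSet_Ioo.prod measurableSet_Ioo)]
  congr 1
  ext1 p
  simp only [polar_symm_eq]
  by_cases h1 : 0 < p.1
  · by_cases h2 : p.2 ∈ Ioo (-Real.pi) Real.pi
    · by_cases h3 : p.1 < 1
      · have hA : p ∈ Ioi (0:ℝ) ×ˢ Ioo (-Real.pi) Real.pi := ⟨h1, h2⟩
        have hB : p ∈ Ioo (0:ℝ) 1 ×ˢ Ioo (-Real.pi) Real.pi := ⟨⟨h1, h3⟩, h2⟩
        have hC : (p.1 : ℂ) * cexp (I * p.2) ∈ unitDisc :=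
          mem_uD.2 (by rw [norm_polar _ _ h1.le]; exact h3)
        rw [indicator_of_mem hA, indicator_of_mem hB, indicator_of_mem hC, Complex.real_smul]
      · have hA : p ∈ Ioi (0:ℝ) ×ˢ Ioo (-Real.pi) Real.pi := ⟨h1, h2⟩
        have hB : p ∉ Ioo (0:ℝ) 1 ×ˢ Ioo (-Real.pi) Real.pi := by
          rintro ⟨⟨_, h⟩, _⟩; exact h3 h
        have hC : (p.1 : ℂ) * cexp (I * p.2) ∉ unitDisc := by
          rw [mem_uD, norm_polar _ _ h1.le]; exact h3
        rw [indicator_of_mem hA, indicator_of_notMem hB, indicator_of_notMem hC, smul_zero]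
    · rw [indicator_of_notMem (by rintro ⟨_, h⟩; exact h2 h), indicator_of_notMem (by rintro ⟨_, h⟩; exact h2 h)]
  · rw [indicator_of_notMem (by rintro ⟨h, _⟩; exact h1 h), indicator_of_notMem (by rintro ⟨⟨h, _⟩, _⟩; exact h1 h)]

theorem theta_int (n : ℕ) : ∫ θ in Ioo (-Real.pi) Real.pi, (θ : ℂ) * cexp (-(I * θ)) ^ n =
    2 * Real.pi * I * (-1) ^ n / n := by
  have hpi : -Real.pi ≤ Real.pi := by linarith [Real.pi_pos]
  rw [← integral_Ioc_eq_integral_Ioo, ← intervalIntegral.integral_of_le hpi]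
  rcases Nat.eq_zero_or_pos n with rfl | hn
  · simp only [pow_zero, mul_one, Nat.cast_zero, div_zero]
    rw [intervalIntegral.integral_ofReal]
    simp
  have hn0 : (n:ℂ) ≠ 0 := by exact_mod_cast hn.ne'
  have hF : ∀ θ : ℝ, HasDerivAt (fun θ : ℝ => (I * θ / n + 1 / (n:ℂ)^2) * cexp (-(n * I) * θ))
      ((θ : ℂ) * cexp (-(I * θ)) ^ n) θ := by
    intro θ
    have h0 : HasDerivAt (fun θ : ℝ => (θ:ℂ)) 1 θ := by
      simpa using (hasDerivAt_id θ).ofReal_comp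
    have h1 := ((h0.const_mul I).div_const (n:ℂ)).add_const (1 / (n:ℂ)^2)
    have h2 := (h0.const_mul (-((n:ℂ) * I))).cexp
    refine (h1.mul h2).congr_deriv ?_
    rw [← Complex.exp_nat_mul, show (n:ℂ) * -(I * θ) = -(n * I) * θ by ring]
    field_simp
    ring_nf
    simp only [I_sq]
    ring
  rw [intervalIntegral.integral_eq_sub_of_hasDerivAt (fun θ _ => hF θ)
    (by apply Continuous.intervalIntegrable; fun_prop)]
  have e1 : cexp (-(n * I) * (Real.pi : ℝ)) = (-1)^n := by
    rw [show -((n:ℂ) * I) * (Real.pi : ℝ) = n * (-(Real.pi * I)) by ring, Complex.exp_nat_mul,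
      Complex.exp_neg, Complex.exp_pi_mul_I]
    norm_num
  have e2 : cexp (-(n * I) * ((-Real.pi : ℝ) : ℂ)) = (-1)^n := by
    push_cast
    rw [show -((n:ℂ) * I) * (-Real.pi) = n * ((Real.pi * I)) by ring, Complex.exp_nat_mul,
      Complex.exp_pi_mul_I]
  rw [e1, e2]
  push_cast
  field_simp
  ring

/-- Weighted moments of `ω/ν̂`. -/
def sg (ω ν : ℝ → ℝ) (k : ℕ) : ℝ := ∫ s in Ioo (0:ℝ) 1, s ^ k * (ω s / tl ν s)

/-- The test function. -/
def tf (ν : ℝ → ℝ) (ζ : ℂ) : ℂ := ((arg ζ / tl ν ‖ζ‖ : ℝ) : ℂ)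

theorem bet_tf (ω ν : ℝ → ℝ) (n : ℕ) : bet ω (tf ν) n = (sg ω ν (n+1) : ℂ) * (2 * I * (-1)^n / n) := by
  unfold bet
  rw [polar_disc_int]
  have : ∀ p ∈ (Ioo (0:ℝ) 1) ×ˢ (Ioo (-Real.pi) Real.pi), (p.1 : ℂ) * (tf ν ((p.1 : ℂ) * cexp (I * p.2)) *
      (ω ‖(p.1 : ℂ) * cexp (I * p.2)‖ : ℂ) * (starRingEnd ℂ ((p.1 : ℂ) * cexp (I * p.2))) ^ n) =
      ((p.1 ^ (n+1) * (ω p.1 / tl ν p.1) : ℝ) : ℂ) * ((p.2 : ℂ) * cexp (-(I * p.2)) ^ n) := by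
    rintro ⟨s, θ⟩ ⟨hs, hθ⟩
    simp only at hs hθ ⊢
    unfold tf
    rw [norm_polar _ _ hs.1.le, Complex.arg_real_mul _ hs.1, mul_comm I (θ:ℂ), Complex.arg_exp_mul_I,
      (toIocMod_eq_self _).2 ⟨hθ.1, by linarith [hθ.2]⟩, map_mul, Complex.conj_ofReal,
      ← Complex.exp_conj, map_mul, Complex.conj_I, Complex.conj_ofReal, mul_pow,
      show (θ:ℂ) * -I = -(θ * I) by ring]
    push_cast
    ring
  rw [setIntegral_congr_fun (measurableSet_Ioo.prod measurableSet_Ioo) this, Measure.volume_eq_prod,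
    setIntegral_prod_mul (fun s : ℝ => ((s ^ (n+1) * (ω s / tl ν s) : ℝ) : ℂ)) (fun θ : ℝ => (θ : ℂ) * cexp (-(I * θ)) ^ n),
    theta_int, integral_complex_ofReal]
  unfold sg
  have := Real.pi_pos.ne'
  have : (Real.pi : ℂ) ≠ 0 := by exact_mod_cast this
  field_simp


theorem le_of_ae_disc {g : ℂ → ℝ} (hg : ContinuousOn g unitDisc) {c : ℝ}
    (hle : ∀ᵐ z ∂(volume.restrict unitDisc), g z ≤ c) : ∀ z ∈ unitDisc, g z ≤ c := by
  have hO : IsOpen (unitDisc ∩ g ⁻¹' (Ioi c)) := hg.isOpen_inter_preimage Metric.isOpen_ball isOpen_Ioi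
  have h0 : volume (unitDisc ∩ g ⁻¹' (Ioi c)) = 0 := by
    rw [ae_restrict_iff' uD_meas, ae_iff] at hle
    refine measure_mono_null ?_ hle
    rintro z ⟨h1, h2⟩
    simp only [mem_ofPred_eq, not_forall, not_le]
    exact ⟨h1, h2⟩
  have := hO.eq_empty_of_measure_zero h0
  intro z hz
  by_contra hcon
  have : z ∈ unitDisc ∩ g ⁻¹' (Ioi c) := ⟨hz, not_le.1 hcon⟩
  simp_all

namespace Nice

/-- integrability of `fω` from that of the kernel integrand at `0`. -/
theorem phi_of_bInt {ω : ℝ → ℝ} (h : Nice ω) {f : ℂ → ℂ} (hb : IntegrableOn (bInt ω f 0) unitDisc) :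
    IntegrableOn (fun ζ => f ζ * (ω ‖ζ‖ : ℂ)) unitDisc := by
  have h0 : (an ω 0 : ℂ) ≠ 0 := by exact_mod_cast (h.an_pos 0).ne'
  have := hb.mul_const (an ω 0 : ℂ)⁻¹
  refine IntegrableOn.congr_fun this (fun ζ _ => ?_) uD_meas
  simp only [bInt_eq]
  rw [tsum_eq_single 0 (fun n hn => by simp [hn])]
  simp only [pow_zero, mul_one]
  field_simp

theorem sg_int {ω ν : ℝ → ℝ} (h : Nice ω) (hν : Nice ν)
    (hb : IntegrableOn (fun ζ : ℂ => ((1 / tl ν ‖ζ‖ : ℝ) : ℂ) * (ω ‖ζ‖ : ℂ)) unitDisc) :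
    IntegrableOn (fun s => s * (ω s / tl ν s)) (Ioo 0 1) := by
  have hm : Measurable fun s => ω s / tl ν s := h.meas.div hν.tl_cont.measurable
  have hb2 := hb.2
  rw [hasFiniteIntegral_iff_norm, polar_disc, Measure.volume_eq_prod, ← Measure.prod_restrict] at hb2
  have e : ∫⁻ p : ℝ × ℝ, ENNReal.ofReal p.1 * ENNReal.ofReal ‖((1 / tl ν ‖(p.1 : ℂ) * cexp (I * p.2)‖ : ℝ) : ℂ) *
      (ω ‖(p.1 : ℂ) * cexp (I * p.2)‖ : ℂ)‖ ∂((volume.restrict (Ioo (0:ℝ) 1)).prod (volume.restrict (Ioo (-Real.pi) Real.pi))) =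
      ∫⁻ p : ℝ × ℝ, ENNReal.ofReal ‖p.1 * (ω p.1 / tl ν p.1)‖ * 1 ∂((volume.restrict (Ioo (0:ℝ) 1)).prod (volume.restrict (Ioo (-Real.pi) Real.pi))) := by
    rw [Measure.prod_restrict]
    refine setLIntegral_congr_fun (measurableSet_Ioo.prod measurableSet_Ioo) ?_
    rintro ⟨s, θ⟩ ⟨hs, hθ⟩
    simp only at hs hθ ⊢
    rw [norm_polar _ _ hs.1.le, ← ENNReal.ofReal_mul hs.1.le, mul_one, norm_mul, Complex.norm_real,
      Complex.norm_real, ← norm_mul, norm_mul s, Real.norm_of_nonneg hs.1.le]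
    congr 3
    ring
  rw [e, lintegral_prod_mul (f := fun s : ℝ => ENNReal.ofReal ‖s * (ω s / tl ν s)‖) (g := fun _ : ℝ => 1)
    (by fun_prop) (by fun_prop)] at hb2
  refine ⟨(measurable_id.mul hm).aestronglyMeasurable, ?_⟩
  rw [hasFiniteIntegral_iff_norm]
  by_contra hcon
  rw [not_lt, top_le_iff] at hcon
  rw [hcon, ENNReal.top_mul] at hb2
  · exact lt_irrefl _ hb2
  · simp [Real.pi_pos]

theorem sg_ge {ω ν : ℝ → ℝ} (h : Nice ω) (hν : Nice ν)
    (hi : IntegrableOn (fun s => s * (ω s / tl ν s)) (Ioo 0 1)) (n : ℕ) {r : ℝ} (hr0 : 0 < r) (hr1 : r < 1) :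
    r ^ (n+1) * (tl ω r / tl ν r) ≤ sg ω ν (n+1) := by
  have hν0 : ∀ s ∈ Ioo (0:ℝ) 1, 0 < tl ν s := fun s hs => hν.pos s ⟨hs.1.le, hs.2⟩
  have hnn : ∀ s ∈ Ioo (0:ℝ) 1, 0 ≤ s ^ (n+1) * (ω s / tl ν s) := fun s hs =>
    mul_nonneg (pow_nonneg hs.1.le _) (div_nonneg (h.nn s) (hν0 s hs).le)
  have hi' : IntegrableOn (fun s => s ^ (n+1) * (ω s / tl ν s)) (Ioo 0 1) := by
    refine Integrable.mono hi ?_ ?_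
    · exact ((measurable_id.pow_const _).mul (h.meas.div hν.tl_cont.measurable)).aestronglyMeasurable
    · filter_upwards [ae_restrict_mem measurableSet_Ioo] with s hs
      rw [norm_mul, norm_mul]
      refine mul_le_mul_of_nonneg_right ?_ (norm_nonneg _)
      rw [norm_pow, Real.norm_of_nonneg hs.1.le]
      calc s^(n+1) ≤ s^1 := pow_le_pow_of_le_one hs.1.le hs.2.le (by omega)
        _ = s := pow_one s
  have hsub : Ioo r 1 ⊆ Ioo (0:ℝ) 1 := Ioo_subset_Ioo_left hr0.le
  have hνr := hν0 r ⟨hr0, hr1⟩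
  calc r ^ (n+1) * (tl ω r / tl ν r) = ∫ s in Ioo r 1, r^(n+1) * (1 / tl ν r) * ω s := by
        rw [integral_const_mul, ← integral_Ioc_eq_integral_Ioo, ← intervalIntegral.integral_of_le hr1.le]
        unfold tl; ring
    _ ≤ ∫ s in Ioo r 1, s ^ (n+1) * (ω s / tl ν s) := by
        refine setIntegral_mono_on (h.int.integrableOn.const_mul _) (hi'.mono_set hsub) measurableSet_Ioo ?_
        intro s hs
        have h1 : r^(n+1) ≤ s^(n+1) := pow_le_pow_left₀ hr0.le hs.1.le _
        have h2 : 1 / tl ν r ≤ 1 / tl ν s := one_div_le_one_div_of_le (hν0 s (hsub hs)) (hν.tl_anti hs.1.le)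
        have h3 := mul_le_mul h1 h2 (by positivity) (pow_nonneg (hr0.le.trans hs.1.le) _)
        calc _ ≤ s^(n+1) * (1 / tl ν s) * ω s := mul_le_mul_of_nonneg_right h3 (h.nn s)
          _ = _ := by ring
    _ ≤ sg ω ν (n+1) := by
        unfold sg
        refine setIntegral_mono_set hi' ?_ hsub.eventuallyLE
        filter_upwards [ae_restrict_mem measurableSet_Ioo] with s hs using hnn s hs

theorem harm (M : ℕ) (hM : 1 ≤ M) (j : ℕ) : (j:ℝ)/2 ≤ ∑ n ∈ Finset.Ico M (2^j*M), 1/(n:ℝ) := by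
  induction j with
  | zero => simp
  | succ j ih =>
    have h1 : M ≤ 2^j*M := Nat.le_mul_of_pos_left _ (by positivity)
    have h2 : 2^j*M ≤ 2^(j+1)*M := Nat.mul_le_mul_right _ (Nat.pow_le_pow_right (by norm_num) (by omega))
    rw [← Finset.sum_Ico_consecutive _ h1 h2]
    have : (1:ℝ)/2 ≤ ∑ n ∈ Finset.Ico (2^j*M) (2^(j+1)*M), 1/(n:ℝ) := by
      have h3 : ∀ n ∈ Finset.Ico (2^j*M) (2^(j+1)*M), 1/((2:ℝ)^(j+1)*M) ≤ 1/(n:ℝ) := by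
        intro n hn
        rw [Finset.mem_Ico] at hn
        have hn0 : 0 < n := lt_of_lt_of_le (by positivity) hn.1
        refine one_div_le_one_div_of_le (by exact_mod_cast hn0) ?_
        exact_mod_cast hn.2.le
      have := Finset.card_nsmul_le_sum _ _ _ h3
      refine le_trans (le_of_eq ?_) this
      rw [Nat.card_Ico, nsmul_eq_mul, Nat.cast_sub h2]
      have : (M:ℝ) ≠ 0 := by exact_mod_cast (by omega : M ≠ 0)
      push_cast
      rw [pow_succ]
      field_simp
      ring
    push_cast
    linarith

/-- Key inequality from boundedness. -/
theorem key_ineq {ω ν : ℝ → ℝ} (h : Nice ω) (hν : Nice ν) (hP : ProjBddH ω (tl ν)) :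
    ∃ Q : ℝ, 0 < Q ∧ ∀ r, 0 < r → r < 1 → ∀ s : Finset ℕ,
      (∑ n ∈ s, r^(2*n+1) / (n * nm ω (2*n+1))) * tl ω r ≤ Q := by
  obtain ⟨C, hC, hP⟩ := hP
  have hpi := Real.pi_pos
  have hνm : Measurable (tl ν) := hν.tl_cont.measurable
  have hνd : ∀ z ∈ unitDisc, 0 < tl ν ‖z‖ := fun z hz => hν.pos _ ⟨norm_nonneg _, mem_uD.1 hz⟩
  -- first test function
  have t1 : wSup (tl ν) (fun ζ => ((1 / tl ν ‖ζ‖ : ℝ) : ℂ)) ≤ ENNReal.ofReal 1 := by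
    refine essSup_le_of_ae_le _ ?_
    filter_upwards [ae_restrict_mem uD_meas] with z hz
    have := hνd z hz
    refine ENNReal.ofReal_le_ofReal ?_
    rw [Complex.norm_of_nonneg (by positivity)]
    exact le_of_eq (by field_simp)
  obtain ⟨i1, -, -⟩ := hP (fun ζ => ((1 / tl ν ‖ζ‖ : ℝ) : ℂ))
    (Measurable.aestronglyMeasurable (by fun_prop)) (t1.trans_lt ENNReal.ofReal_lt_top)
  have hsi := h.sg_int hν (h.phi_of_bInt (i1 0 (mem_uD.2 (by simp))))
  -- second test function
  have t2 : wSup (tl ν) (tf ν) ≤ ENNReal.ofReal Real.pi := by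
    refine essSup_le_of_ae_le _ ?_
    filter_upwards [ae_restrict_mem uD_meas] with z hz
    have := hνd z hz
    refine ENNReal.ofReal_le_ofReal ?_
    unfold tf
    rw [Complex.norm_real, norm_div, Real.norm_of_nonneg this.le, div_mul_cancel₀ _ this.ne']
    exact Complex.abs_arg_le_pi z
  obtain ⟨i2, d2, b2⟩ := hP (tf ν) (Measurable.aestronglyMeasurable (by
      unfold tf
      have := Complex.measurable_arg
      fun_prop)) (t2.trans_lt ENNReal.ofReal_lt_top)
  have hφ := h.phi_of_bInt (i2 0 (mem_uD.2 (by simp)))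
  have b3 : ∀ z ∈ unitDisc, ‖bProj ω (tf ν) z‖ * tl ν ‖z‖ ≤ C * Real.pi := by
    refine le_of_ae_disc (d2.continuousOn.norm.mul (hν.tl_cont.comp continuous_norm).continuousOn) ?_
    have := ENNReal.ae_le_essSup (μ := volume.restrict unitDisc)
        (fun z => ENNReal.ofReal (‖bProj ω (tf ν) z‖ * tl ν ‖z‖))
    filter_upwards [this] with z hz
    have h2 : ENNReal.ofReal (‖bProj ω (tf ν) z‖ * tl ν ‖z‖) ≤ ENNReal.ofReal (C * Real.pi) := by
      rw [ENNReal.ofReal_mul hC.le]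
      exact hz.trans (b2.trans (mul_le_mul_right t2 _))
    exact (ENNReal.ofReal_le_ofReal_iff (by positivity)).1 h2
  refine ⟨C * Real.pi, by positivity, ?_⟩
  intro r hr0 hr1 s
  have hrn : ‖(-(r:ℂ))‖ = r := by rw [norm_neg, Complex.norm_of_nonneg hr0.le]
  have hs := h.bProj_hasSum hφ (z := -(r:ℂ)) (by rw [hrn]; exact hr1)
  set t : ℕ → ℝ := fun n => 2 * an ω n * r^n * sg ω ν (n+1) / n with ht
  have hs2 : HasSum (fun n => ((t n : ℝ) : ℂ)) (-I * bProj ω (tf ν) (-(r:ℂ))) := by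
    refine (hs.mul_left (-I)).congr_fun ?_
    intro n
    rw [bet_tf, ht]
    push_cast
    rw [neg_pow]
    have : ((-1:ℂ))^n * (-1)^n = 1 := by rw [← mul_pow]; norm_num
    calc _ = (-(I*I)) * (((-1:ℂ))^n * (-1)^n) * (2 * an ω n * r^n * sg ω ν (n+1) / n) := by
          rw [this, I_mul_I]; push_cast; ring
      _ = _ := by ring
  have hs3 := Complex.hasSum_re hs2
  simp only [Complex.ofReal_re] at hs3
  have hνr : 0 < tl ν r := hν.pos r ⟨hr0.le, hr1⟩
  have hωr : 0 < tl ω r := h.pos r ⟨hr0.le, hr1⟩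
  have tge : ∀ n, r^(2*n+1) / (n * nm ω (2*n+1)) * (tl ω r / tl ν r) ≤ t n := by
    intro n
    have h1 := h.sg_ge hν hsi n hr0 hr1
    have h2 := h.nm_pos (2*n+1)
    rw [ht]
    simp only [an]
    calc _ = (r^n / (n * nm ω (2*n+1))) * (r ^ (n+1) * (tl ω r / tl ν r)) := by
          rw [show 2*n+1 = n + (n+1) by ring, pow_add]; ring
      _ ≤ (r^n / (n * nm ω (2*n+1))) * sg ω ν (n+1) := mul_le_mul_of_nonneg_left h1 (by positivity)
      _ = _ := by
          rw [show 2 * (1 / (2 * nm ω (2*n+1))) = 1 / nm ω (2*n+1) by field_simp, div_mul_eq_div_div]; ring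
  have tnn : ∀ n, 0 ≤ t n := fun n => le_trans (by have := h.nm_pos (2*n+1); positivity) (tge n)
  have h4 : ∑ n ∈ s, t n ≤ ‖bProj ω (tf ν) (-(r:ℂ))‖ := by
    calc _ ≤ _ := sum_le_hasSum s (fun n _ => tnn n) hs3
      _ ≤ _ := (Complex.re_le_norm _)
      _ = _ := by simp
  have h5 := b3 (-(r:ℂ)) (mem_uD.2 (by rw [hrn]; exact hr1))
  rw [hrn] at h5
  calc _ = (∑ n ∈ s, r^(2*n+1) / (n * nm ω (2*n+1)) * (tl ω r / tl ν r)) * tl ν r := by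
        rw [← Finset.sum_mul]; field_simp
    _ ≤ (∑ n ∈ s, t n) * tl ν r := mul_le_mul_of_nonneg_right (Finset.sum_le_sum fun n _ => tge n) hνr.le
    _ ≤ _ := (mul_le_mul_of_nonneg_right h4 hνr.le).trans h5

theorem dcheck_of {ω ν : ℝ → ℝ} (h : Nice ω) (hν : Nice ν) (hh : Dhat ω) (hP : ProjBddH ω (tl ν)) :
    Dcheck ω := by
  obtain ⟨Q, hQ, hk⟩ := h.key_ineq hν hP
  obtain ⟨C, hC⟩ := hh
  obtain ⟨A, hA, hup⟩ := h.nm_upper hC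
  obtain ⟨j, hj⟩ := exists_nat_ge (8*A*Q)
  have main : ∀ M : ℕ, 1 ≤ M → 2 * tl ω (1 - 1/(4*(2^j*M))) ≤ tl ω (1 - 1/M) := by
    intro M hM
    have hM' : (1:ℝ) ≤ M := by exact_mod_cast hM
    set N : ℕ := 2^j*M with hN
    have hNr : (N:ℝ) = 2^j*M := by rw [hN]; push_cast; ring
    have hN1 : 1 ≤ N := Nat.one_le_iff_ne_zero.2 (by positivity)
    have hN' : (1:ℝ) ≤ N := by exact_mod_cast hN1
    rw [← hNr]
    set r : ℝ := 1 - 1/(4*N) with hr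
    have hq : 1/(4*(N:ℝ)) ≤ 1/4 := one_div_le_one_div_of_le (by norm_num) (by linarith)
    have hq0 : 0 < 1/(4*(N:ℝ)) := by positivity
    have hr0 : 0 < r := by linarith
    have hr1 : r < 1 := by linarith
    have hrN : 1/2 ≤ r^(2*N) := by
      have := one_add_mul_le_pow (a := -(1/(4*(N:ℝ)))) (by linarith) (2*N)
      rw [hr, sub_eq_add_neg]
      refine le_trans (le_of_eq ?_) this
      push_cast; field_simp; norm_num
    have hTM : 0 < tl ω (1 - 1/M) := by
      refine h.pos _ ⟨?_, ?_⟩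
      · have : 1/(M:ℝ) ≤ 1 := by rw [div_le_one (by linarith)]; exact hM'
        linarith
      · have : 0 < 1/(M:ℝ) := by positivity
        linarith
    have hTr : 0 < tl ω r := h.pos r ⟨hr0.le, hr1⟩
    have hterm : ∀ n ∈ Finset.Ico M N, 1/(n:ℝ) * (1/(2 * (A * tl ω (1 - 1/M)))) ≤
        r^(2*n+1) / (n * nm ω (2*n+1)) := by
      intro n hn
      rw [Finset.mem_Ico] at hn
      have hn1 : 1 ≤ n := hM.trans hn.1
      have hn' : (0:ℝ) < n := by exact_mod_cast hn1
      have h1 : nm ω (2*n+1) ≤ A * tl ω (1 - 1/M) := by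
        refine (h.nm_anti (show n ≤ 2*n+1 by omega)).trans ((hup n hn1).trans ?_)
        refine mul_le_mul_of_nonneg_left (h.tl_anti ?_) hA.le
        have : 1/(n:ℝ) ≤ 1/M := one_div_le_one_div_of_le (by linarith) (by exact_mod_cast hn.1)
        linarith
      have h2 : 1/2 ≤ r^(2*n+1) := hrN.trans (pow_le_pow_of_le_one hr0.le hr1.le (by omega))
      have h3 := h.nm_pos (2*n+1)
      calc _ = (1/2) / (n * (A * tl ω (1 - 1/M))) := by field_simp
        _ ≤ r^(2*n+1) / (n * nm ω (2*n+1)) := by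
          refine div_le_div₀ (by positivity) h2 (by positivity) ?_
          exact mul_le_mul_of_nonneg_left h1 hn'.le
    have hsum := Finset.sum_le_sum hterm
    rw [← Finset.sum_mul] at hsum
    have hh2 := harm M hM j
    have h6 : (j:ℝ)/2 * (1/(2 * (A * tl ω (1 - 1/M)))) * tl ω r ≤ Q := by
      refine le_trans ?_ (hk r hr0 hr1 (Finset.Ico M N))
      refine mul_le_mul_of_nonneg_right (le_trans ?_ hsum) hTr.le
      exact mul_le_mul_of_nonneg_right hh2 (by positivity)
    have h7 : (j:ℝ) * tl ω r ≤ 4 * A * Q * tl ω (1 - 1/M) := by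
      have e : (j:ℝ)/2 * (1/(2 * (A * tl ω (1 - 1/M)))) * tl ω r =
        (j * tl ω r) / (4 * A * tl ω (1 - 1/M)) := by field_simp; norm_num
      rw [e, div_le_iff₀ (by positivity)] at h6
      linarith
    have h8 : 8*A*Q * tl ω r ≤ j * tl ω r := mul_le_mul_of_nonneg_right hj hTr.le
    have h9 : 0 < 4 * A * Q := by positivity
    have h10 : (4*A*Q) * (2 * tl ω r) ≤ (4 * A * Q) * tl ω (1 - 1/M) := by linarith
    exact le_of_mul_le_mul_left h10 h9
  refine ⟨8*2^j, 2, ?_, by norm_num, ?_⟩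
  · have : (1:ℝ) ≤ 2^j := one_le_pow₀ (by norm_num)
    linarith
  intro r hr
  have hd : 0 < 1 - r := by linarith [hr.2]
  set M : ℕ := ⌈1/(1-r)⌉₊ with hM
  have hM1 : 1/(1-r) ≤ M := Nat.le_ceil _
  have hM2 : (M:ℝ) < 1/(1-r) + 1 := Nat.ceil_lt_add_one (by positivity)
  have hone : 1 ≤ 1/(1-r) := by rw [le_div_iff₀ hd]; linarith [hr.1]
  have hMr : (1:ℝ) ≤ M := hone.trans hM1
  have hM3 : 1 ≤ M := by exact_mod_cast hMr
  refine le_trans ?_ ((main M hM3).trans (h.tl_anti ?_))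
  · refine mul_le_mul_of_nonneg_left (h.tl_anti ?_) (by norm_num)
    have h1 : (M:ℝ) ≤ 2/(1-r) := by
      have : 2/(1-r) = 1/(1-r) + 1/(1-r) := by ring
      linarith
    have h2 : (1-r)/(8*2^j) ≤ 1/(4*(2^j*(M:ℝ))) := by
      rw [le_div_iff₀ hd] at h1
      rw [div_le_div_iff₀ (by positivity) (by positivity)]
      have : (0:ℝ) < 2^j := by positivity
      nlinarith
    linarith
  · have : 1/(M:ℝ) ≤ 1 - r := by
      rw [div_le_iff₀ hd] at hM1
      rw [div_le_iff₀ (by linarith)]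
      linarith
    linarith

end Nice


theorem ae_norm_disc {p : ℝ → Prop} (hp : ∀ᵐ s ∂(volume.restrict (Ioo (0:ℝ) 1)), p s) :
    ∀ᵐ ζ : ℂ ∂(volume.restrict unitDisc), p ‖ζ‖ := by
  set μ := volume.restrict (Ioo (0:ℝ) 1) with hμ
  rw [ae_iff] at hp
  set U := toMeasurable μ {s | ¬ p s} with hU
  have hUm : MeasurableSet U := measurableSet_toMeasurable _ _
  have hU0 : μ U = 0 := by rw [hU, measure_toMeasurable]; exact hp
  have hle := polar_le (fun ζ : ℂ => U.indicator (fun _ => (1:ℝ≥0∞)) ‖ζ‖)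
  have h0 : ∫⁻ s in Ioo (0:ℝ) 1, ENNReal.ofReal s *
      ∫⁻ θ in Ioo (-Real.pi) Real.pi, U.indicator (fun _ => (1:ℝ≥0∞)) ‖(s : ℂ) * cexp (I * θ)‖ = 0 := by
    have hz : ∀ᵐ s ∂μ, s ∉ U := measure_eq_zero_iff_ae_notMem.1 hU0
    have : ∀ᵐ s ∂μ, ENNReal.ofReal s *
      ∫⁻ θ in Ioo (-Real.pi) Real.pi, U.indicator (fun _ => (1:ℝ≥0∞)) ‖(s : ℂ) * cexp (I * θ)‖ = 0 := by
      filter_upwards [hz, ae_restrict_mem measurableSet_Ioo] with s hs hs1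
      simp_rw [norm_polar _ _ hs1.1.le, indicator_of_notMem hs]
      simp
    rw [lintegral_congr_ae this]
    simp
  rw [h0, nonpos_iff_eq_zero] at hle
  have hmm : Measurable fun ζ : ℂ => U.indicator (fun _ => (1:ℝ≥0∞)) ‖ζ‖ :=
    (measurable_const.indicator hUm).comp measurable_norm
  rw [lintegral_eq_zero_iff hmm] at hle
  filter_upwards [hle] with ζ hζ
  by_contra hcon
  have : ‖ζ‖ ∈ U := subset_toMeasurable _ _ hcon
  simp [this] at hζ

theorem exists_nice {ω : ℝ → ℝ} (hω : IsRadialWeight ω) : ∃ ω', Nice ω' ∧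
    (∀ᵐ s ∂(volume.restrict (Ico (0:ℝ) 1)), ω' s = ω s) := by
  obtain ⟨h1, h2, h3⟩ := hω
  have hg := (integrable_indicator_iff measurableSet_Ico).2 h2
  set g' := hg.aestronglyMeasurable.mk _ with hg'
  have hgm : Measurable g' := hg.aestronglyMeasurable.stronglyMeasurable_mk.measurable
  have hge := hg.aestronglyMeasurable.ae_eq_mk
  set ω' : ℝ → ℝ := (Ico (0:ℝ) 1).indicator (fun s => max (g' s) 0) with hω'
  have hae : ω' =ᵐ[volume] (Ico (0:ℝ) 1).indicator ω := by
    filter_upwards [hge] with s hs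
    rw [hω']
    by_cases hm : s ∈ Ico (0:ℝ) 1
    · rw [indicator_of_mem hm] at hs ⊢
      rw [indicator_of_mem hm, hg', ← hs]
      exact max_eq_left (h1 s hm)
    · rw [indicator_of_notMem hm, indicator_of_notMem hm]
  have hae2 : ∀ᵐ s ∂(volume.restrict (Ico (0:ℝ) 1)), ω' s = ω s := by
    filter_upwards [ae_restrict_of_ae hae, ae_restrict_mem measurableSet_Ico] with s hs hm
    rw [hs, indicator_of_mem hm]
  refine ⟨ω', ⟨?_, ?_, ?_, ?_⟩, hae2⟩
  · exact (hgm.max measurable_const).indicator measurableSet_Ico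
  · intro s
    exact indicator_nonneg (fun _ _ => le_max_right _ _) s
  · exact hg.congr hae.symm
  · intro r hr
    have := h3 r hr
    unfold tl at this ⊢
    rw [intervalIntegral.integral_of_le hr.2.le, ← integral_Ico_eq_integral_Ioc] at this ⊢
    rwa [integral_congr_ae (ae_restrict_of_ae_restrict_of_subset (Ico_subset_Ico_left hr.1) hae2)]

section congr
variable {ω ω' : ℝ → ℝ}

theorem tl_congr (hae : ∀ᵐ s ∂(volume.restrict (Ico (0:ℝ) 1)), ω' s = ω s) {r : ℝ}
    (h0 : 0 ≤ r) (h1 : r ≤ 1) : tl ω' r = tl ω r := by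
  unfold tl
  rw [intervalIntegral.integral_of_le h1, ← integral_Ico_eq_integral_Ioc,
    intervalIntegral.integral_of_le h1, ← integral_Ico_eq_integral_Ioc]
  exact integral_congr_ae (ae_restrict_of_ae_restrict_of_subset (Ico_subset_Ico_left h0) hae)

theorem mom_congr (hae : ∀ᵐ s ∂(volume.restrict (Ico (0:ℝ) 1)), ω' s = ω s) (x : ℝ) :
    mom ω' x = mom ω x := by
  unfold mom
  rw [intervalIntegral.integral_of_le zero_le_one, ← integral_Ico_eq_integral_Ioc,
    intervalIntegral.integral_of_le zero_le_one, ← integral_Ico_eq_integral_Ioc]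
  refine integral_congr_ae ?_
  filter_upwards [hae] with s hs
  rw [hs]

theorem wSup_congr {v v' : ℝ → ℝ} (hv : ∀ r, 0 ≤ r → r < 1 → v' r = v r) (f : ℂ → ℂ) :
    wSup v' f = wSup v f := by
  unfold wSup
  refine essSup_congr_ae ?_
  filter_upwards [ae_restrict_mem uD_meas] with z hz
  rw [hv _ (norm_nonneg _) (mem_uD.1 hz)]

theorem ProjBddH_congr (hae : ∀ᵐ s ∂(volume.restrict (Ico (0:ℝ) 1)), ω' s = ω s)
    {v v' : ℝ → ℝ} (hv : ∀ r, 0 ≤ r → r < 1 → v' r = v r) (hP : ProjBddH ω v) : ProjBddH ω' v' := by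
  obtain ⟨C, hC, hP⟩ := hP
  refine ⟨C, hC, fun f hf hS => ?_⟩
  rw [wSup_congr hv] at hS
  obtain ⟨p1, p2, p3⟩ := hP f hf hS
  have hb : ∀ z, bInt ω f z =ᵐ[volume.restrict unitDisc] bInt ω' f z := by
    intro z
    have := ae_norm_disc (ae_restrict_of_ae_restrict_of_subset Ioo_subset_Ico_self hae)
    filter_upwards [this] with ζ hζ
    unfold bInt bKer
    simp_rw [mom_congr hae]
    rw [hζ]
  have hp : bProj ω f = bProj ω' f := by
    ext z
    unfold bProj
    rw [integral_congr_ae (hb z)]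
  rw [wSup_congr hv, wSup_congr hv, ← hp]
  exact ⟨fun z hz => (p1 z hz).congr (hb z), p2, p3⟩

theorem Dhat_congr (hae : ∀ᵐ s ∂(volume.restrict (Ico (0:ℝ) 1)), ω' s = ω s) (hd : Dhat ω) : Dhat ω' := by
  obtain ⟨C, hC⟩ := hd
  refine ⟨C, fun r hr => ?_⟩
  rw [tl_congr hae hr.1 hr.2.le, tl_congr hae (by linarith [hr.1]) (by linarith [hr.2])]
  exact hC r hr

theorem Dcheck_congr (hae : ∀ᵐ s ∂(volume.restrict (Ico (0:ℝ) 1)), ω' s = ω s) (hd : Dcheck ω) :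
    Dcheck ω' := by
  obtain ⟨K, C, hK, hC1, hC⟩ := hd
  refine ⟨K, C, hK, hC1, fun r hr => ?_⟩
  have h1 : (1 - r)/K ≤ 1 := by
    rw [div_le_one (by linarith)]; linarith [hr.1]
  have h2 : 0 ≤ (1-r)/K := div_nonneg (by linarith [hr.2]) (by linarith)
  rw [tl_congr hae hr.1 hr.2.le, tl_congr hae (by linarith) (by linarith)]
  exact hC r hr

end congr

theorem stmt3 (ω : ℝ → ℝ) (hω : IsRadialWeight ω) (hωD : Dhat ω) :
    ((∃ ν : ℝ → ℝ, IsRadialWeight ν ∧ ProjBddH ω (tl ν)) ↔ Dcheck ω) ∧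
    (¬ Dcheck ω → ∀ ν : ℝ → ℝ, IsRadialWeight ν → ¬ ProjBddH ω (tl ν)) := by
  obtain ⟨ω', hN, hae⟩ := exists_nice hω
  have hae' : ∀ᵐ s ∂(volume.restrict (Ico (0:ℝ) 1)), ω s = ω' s := hae.mono fun s hs => hs.symm
  have hD' := Dhat_congr hae hωD
  have fwd : ∀ ν : ℝ → ℝ, IsRadialWeight ν → ProjBddH ω (tl ν) → Dcheck ω := by
    intro ν hν hP
    obtain ⟨ν', hN2, hae2⟩ := exists_nice hν
    have hP' : ProjBddH ω' (tl ν') :=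
      ProjBddH_congr hae (fun r h0 h1 => tl_congr hae2 h0 h1.le) hP
    exact Dcheck_congr hae' (hN.dcheck_of hN2 hD' hP')
  refine ⟨⟨fun ⟨ν, hν, hP⟩ => fwd ν hν hP, fun hc => ?_⟩, fun hc ν hν hP => hc (fwd ν hν hP)⟩
  obtain ⟨ν, hν, hP⟩ := hN.exists_nu hD' (Dcheck_congr hae hc)
  exact ⟨ν, hν, ProjBddH_congr hae' (fun _ _ _ => rfl) hP⟩
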